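/- arXiv:2502.00526 — 2 statements merged into one kernel-verified Lean document; each statement's English description precedes it below -/
import Mathlib

section
/- Let Δ < 0 be a fundamental discriminant, K = ℚ(√Δ), and let t be the number of prime discriminants in the factorization of Δ (equivalently, the number of distinct prime divisors of Δ). Then the quotient Cl(K)/Cl(K)² of the ideal class group of K by its subgroup of squares has order 2^{t−1}. -/
open NumberField

/-- An integer `Δ ≠ 1` is a fundamental discriminant if either `Δ ≡ 1 (mod 4)` and `Δ` is
squarefree, or `Δ = 4m` where `m` is a squarefree integer with `m ≡ 2` or `3 (mod 4)`. -/
def IsFundamentalDiscriminant (Δ : ℤ) : Prop :=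
  Δ ≠ 1 ∧ ((Δ % 4 = 1 ∧ Squarefree Δ) ∨
    ∃ m : ℤ, Δ = 4 * m ∧ Squarefree m ∧ (m % 4 = 2 ∨ m % 4 = 3))

/-!
Genus theory by way of ambiguous ideals. Let `E` be the unit group of an imaginary quadratic field
and let `t` primes ramify. Norms are nonnegative, so if `I ^ 2 = (b)` then `N b = (N I) ^ 2`, and
Hilbert 90 provides `w ≠ 0` for which `b * w ^ 2` is a positive integer. Hence every class in
`Cl[2]` contains an ideal whose square is generated by a positive integer; up to a rational factor,
such an ideal is a product of ramified primes. Therefore `Cl[2]` is the image of the `2 ^ t` sets of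
ramified primes.

The product over `S` is principal exactly when `∏ p ∈ S, p = ε * a ^ 2` with `ε ∈ E`. The class of
`ε` modulo squares determines `S`, because a positive integer which is a square in `𝓞 K` is a
square in `ℕ`, and every `ε` occurs, again by Hilbert 90. So there are `|E / E ^ 2| = 2` relations
and `2 * |Cl[2]| = 2 ^ t`, while `|Cl / Cl ^ 2| = |Cl[2]|` because `Cl` is finite.
-/

section Groups

variable {G ι : Type*} [CommGroup G]

theorem prod_symmDiff_of_sq_eq_one [DecidableEq ι] {c : ι → G} (hc : ∀ i, c i ^ 2 = 1)
    (S U : Finset ι) : ∏ i ∈ symmDiff S U, c i = (∏ i ∈ S, c i) * ∏ i ∈ U, c i := by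
  have hinter : (∏ i ∈ S ∩ U, c i) * ∏ i ∈ S ∩ U, c i = 1 := by
    rw [← pow_two, ← Finset.prod_pow, Finset.prod_eq_one fun i _ ↦ hc i]
  have hdisj : Disjoint (S \ U) (U \ S) := disjoint_sdiff_sdiff
  rw [symmDiff, Finset.sup_eq_union, Finset.prod_union hdisj,
    ← Finset.prod_inter_mul_prod_sdiff S U, ← Finset.prod_inter_mul_prod_sdiff U S,
    Finset.inter_comm U S, mul_mul_mul_comm, hinter, one_mul]

/-- The product `S ↦ ∏ i ∈ S, c i` of a family of involutions, as a homomorphism on the `𝔽₂`-vector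
space of finite index sets, which is encoded as the additive group of the Boolean ring of these
sets. -/
def subsetProdHom [DecidableEq ι] (c : ι → G) (hc : ∀ i, c i ^ 2 = 1) :
    AsBoolRing (Finset ι) →+ Additive G where
  toFun S := .ofMul (∏ i ∈ ofBoolRing S, c i)
  map_zero' := rfl
  map_add' S U := prod_symmDiff_of_sq_eq_one hc (ofBoolRing S) (ofBoolRing U)

theorem card_prod_eq_one_mul_card_ker_sq [Fintype ι] {c : ι → G} (hc : ∀ i, c i ^ 2 = 1)
    (hsurj : ∀ g : G, g ^ 2 = 1 → ∃ S : Finset ι, ∏ i ∈ S, c i = g) :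
    Nat.card {S : Finset ι // ∏ i ∈ S, c i = 1} * Nat.card (powMonoidHom 2 : G →* G).ker =
      2 ^ Fintype.card ι := by
  classical
  have hrange : Nat.card (subsetProdHom c hc).range = Nat.card (powMonoidHom 2 : G →* G).ker := by
    refine Nat.card_congr (Additive.toMul.subtypeEquiv fun g ↦ ⟨?_, fun hg ↦ ?_⟩)
    · rintro ⟨S, rfl⟩
      change (∏ i ∈ ofBoolRing S, c i) ^ 2 = 1
      rw [← Finset.prod_pow, Finset.prod_eq_one fun i _ ↦ hc i]
    · obtain ⟨S, hS⟩ := hsurj g.toMul hg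
      exact ⟨toBoolRing S, hS⟩
  have hcard : Nat.card (AsBoolRing (Finset ι)) = 2 ^ Fintype.card ι := by
    rw [Nat.card_congr ofBoolRing, Nat.card_eq_fintype_card, Fintype.card_finset]
  rw [← hcard, ← (subsetProdHom c hc).ker.card_mul_index, AddSubgroup.index_ker, hrange]
  rfl

theorem card_quotient_range_powMonoidHom [Finite G] (n : ℕ) :
    Nat.card (G ⧸ (powMonoidHom n : G →* G).range) = Nat.card (powMonoidHom n : G →* G).ker :=
  Subgroup.index_range

end Groups

/-! ### Arithmetic of squares -/

theorem int_sq_emod_four (s : ℤ) : s ^ 2 % 4 = 0 ∨ s ^ 2 % 4 = 1 := by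
  rcases Int.even_or_odd s with h | h
  · exact .inl (Int.emod_eq_zero_of_dvd (pow_dvd_pow_of_dvd h.two_dvd 2))
  · exact .inr (Int.sq_mod_four_eq_one_of_odd h)

theorem eq_of_squarefree_of_isSquare_mul {m n : ℕ} (hm : Squarefree m) (hn : Squarefree n)
    (h : IsSquare (m * n)) : m = n := by
  obtain ⟨s, hs⟩ := h
  rw [← sq] at hs
  have hms : m ∣ s := (hm.dvd_pow_iff_dvd two_ne_zero).mp ⟨n, hs.symm⟩
  have hns : n ∣ s := (hn.dvd_pow_iff_dvd two_ne_zero).mp ⟨m, by rw [← hs, mul_comm]⟩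
  refine Nat.dvd_antisymm ?_ ?_
  · exact Nat.dvd_of_mul_dvd_mul_left hm.ne_zero.pos (by rw [hs, sq]; exact mul_dvd_mul hms hms)
  · exact Nat.dvd_of_mul_dvd_mul_right hn.ne_zero.pos (by rw [hs, sq]; exact mul_dvd_mul hns hns)

theorem card_ker_sq_units (R : Type*) [CommRing R] [IsDomain R] [CharZero R] :
    Nat.card (powMonoidHom 2 : Rˣ →* Rˣ).ker = 2 := by
  have hprim : IsPrimitiveRoot (-1 : R) 2 := IsPrimitiveRoot.neg_one 0 (by norm_num)
  exact hprim.card_rootsOfUnity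

theorem exists_eq_mul_sq_of_mul_sq_eq {R : Type*} [CommRing R] [IsDomain R] [IsIntegrallyClosed R]
    {ε η : Rˣ} {a b : R} (hb : b ≠ 0) (h : ε * a ^ 2 = η * b ^ 2) : ∃ v : Rˣ, η = ε * v ^ 2 := by
  have hab : a ^ 2 ∣ b ^ 2 := (Units.dvd_mul_left (u := η)).mp ⟨ε, by rw [← h, mul_comm]⟩
  have hba : b ^ 2 ∣ a ^ 2 := (Units.dvd_mul_left (u := ε)).mp ⟨η, by rw [h, mul_comm]⟩
  obtain ⟨v, rfl⟩ : Associated b a := associated_of_dvd_dvd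
    ((IsIntegrallyClosed.pow_dvd_pow_iff two_ne_zero).mp hba)
    ((IsIntegrallyClosed.pow_dvd_pow_iff two_ne_zero).mp hab)
  refine ⟨v, Units.ext (mul_right_cancel₀ (pow_ne_zero 2 hb) ?_)⟩
  rw [← h]
  push_cast
  ring

section

open Algebra Module Ideal
open scoped nonZeroDivisors

/-! ### Quadratic extensions -/

section Quadratic

theorem trace_algebraMap_mul (R : Type*) {A : Type*} [CommRing R] [CommRing A] [Algebra R A]
    (r : R) (x : A) : trace R A (algebraMap R A r * x) = r * trace R A x := by
  rw [← Algebra.smul_def, map_smul, smul_eq_mul]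

variable {R A : Type*} [CommRing R] [Nontrivial R] [CommRing A] [Algebra R A]
  [IsQuadraticExtension R A]

variable (R) in
theorem mul_trace_sub_self (x : A) :
    x * (algebraMap R A (trace R A x) - x) = algebraMap R A (norm R x) := by
  let b : Basis (Fin 2) R A := finBasisOfFinrankEq R A (IsQuadraticExtension.finrank_eq_two R A)
  have hcharpoly : (lmul R A x).charpoly =
      .X ^ 2 - .C (trace R A x) * .X + .C (norm R x) := by
    rw [← LinearMap.charpoly_toMatrix _ b, Matrix.charpoly_fin_two, trace_eq_matrix_trace b,
      norm_eq_matrix_det b]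
    rfl
  have hzero := aeval_self_charpoly_lmul (R := R) x
  rw [hcharpoly] at hzero
  simp only [map_add, map_sub, map_mul, map_pow, Polynomial.aeval_X, Polynomial.aeval_C] at hzero
  linear_combination -hzero

variable (R A) in
theorem trace_algebraMap_eq_two_mul (r : R) : trace R A (algebraMap R A r) = 2 * r := by
  rw [trace_algebraMap, IsQuadraticExtension.finrank_eq_two, nsmul_eq_mul, Nat.cast_ofNat]

variable (R) in
theorem sq_eq_trace_mul_sub_norm (x : A) :
    x ^ 2 = algebraMap R A (trace R A x) * x - algebraMap R A (norm R x) := by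
  linear_combination -mul_trace_sub_self R x

variable (R) in
theorem trace_sq (x : A) : trace R A (x ^ 2) = trace R A x ^ 2 - 2 * norm R x := by
  rw [sq_eq_trace_mul_sub_norm R, map_sub, trace_algebraMap_mul, trace_algebraMap_eq_two_mul, sq]

theorem trace_mul_sq (x y : A) :
    trace R A (x * y) ^ 2 = trace R A x * trace R A y * trace R A (x * y) -
      (trace R A x ^ 2 * norm R y + trace R A y ^ 2 * norm R x - 4 * norm R x * norm R y) := by
  have hexpand : (x * y) ^ 2 =
      algebraMap R A (trace R A x * trace R A y) * (x * y) -
      algebraMap R A (trace R A x * norm R y) * x - algebraMap R A (trace R A y * norm R x) * y +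
      algebraMap R A (norm R x * norm R y) := by
    simp only [mul_pow, sq_eq_trace_mul_sub_norm R x, sq_eq_trace_mul_sub_norm R y, map_mul]
    ring
  have htrace := congrArg (trace R A) hexpand
  simp only [trace_sq, map_mul (norm R), map_sub (trace R A), map_add (trace R A),
    trace_algebraMap_mul, trace_algebraMap_eq_two_mul] at htrace
  linear_combination htrace

theorem discr_pair (x y : A) :
    discr R ![x, y] =
      (trace R A x * trace R A y - trace R A (x * y)) ^ 2 - 4 * norm R x * norm R y := by
  rw [discr_def, Matrix.det_fin_two]
  simp only [traceMatrix_apply, traceForm_apply, Matrix.cons_val_zero, Matrix.cons_val_one, ← sq,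
    trace_sq, mul_comm y x]
  linear_combination -2 * trace_mul_sq (R := R) x y

theorem discr_one_pair (x : A) :
    discr R ![1, x] = trace R A x ^ 2 - 4 * norm R x := by
  have hone : trace R A (1 : A) = 2 := by simpa using trace_algebraMap_eq_two_mul R A 1
  simp only [discr_pair, one_mul, hone, map_one]
  ring

variable (R A) in
theorem exists_ne_zero_trace_eq_zero : ∃ w : A, w ≠ 0 ∧ trace R A w = 0 := by
  suffices hker : LinearMap.ker (trace R A) ≠ ⊥ by
    obtain ⟨w, hw, hne⟩ := Submodule.exists_mem_ne_zero_of_ne_bot hker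
    exact ⟨w, hne, hw⟩
  intro hker
  have hle := LinearMap.finrank_le_finrank_of_injective (LinearMap.ker_eq_bot.mp hker)
  rw [finrank_self, IsQuadraticExtension.finrank_eq_two] at hle
  exact absurd hle (by decide)

end Quadratic

/-! ### Ramification -/

section Ramification

variable {K : Type*} [Field K] [NumberField K]

theorem not_isUnramifiedAt_iff_sq_dvd {p : ℤ} (hp : Prime p) {P : Ideal (𝓞 K)} [hP : P.IsPrime]
    (hpP : (p : 𝓞 K) ∈ P) : ¬ IsUnramifiedAt ℤ P ↔ P ^ 2 ∣ span {(p : 𝓞 K)} := by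
  have := (Ideal.liesOver_span_iff hP.ne_top hp).mpr hpP
  have hmap : (span {p}).map (algebraMap ℤ (𝓞 K)) = span {(p : 𝓞 K)} := by
    rw [map_span, Set.image_singleton, eq_intCast]
  have hle : (span {p}).map (algebraMap ℤ (𝓞 K)) ≤ P := by
    rwa [hmap, span_singleton_le_iff_mem]
  have hbot : span {p} ≠ ⊥ := by simpa using hp.ne_zero
  rw [← Ideal.ramificationIdx_eq_one_iff, ← Ideal.ramificationIdx'_eq_ramificationIdx _ _ hbot,
    ← ne_eq, Ideal.ramificationIdx'_ne_one_iff hle, hmap, dvd_iff_le]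

variable (K) in
theorem dvd_discr_iff_exists_isPrime_sq_dvd {p : ℤ} (hp : Prime p) :
    p ∣ NumberField.discr K ↔ ∃ P : Ideal (𝓞 K), P.IsPrime ∧ P ^ 2 ∣ span {(p : 𝓞 K)} := by
  rw [← not_not (a := p ∣ NumberField.discr K), NumberField.not_dvd_discr_iff_forall_mem K (𝓞 K) hp]
  push Not
  refine exists_congr fun P ↦
    ⟨fun ⟨hP, hpP, h⟩ ↦ ⟨hP, (not_isUnramifiedAt_iff_sq_dvd hp hpP).mp h⟩, fun ⟨hP, hdvd⟩ ↦ ?_⟩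
  have hpP : (p : 𝓞 K) ∈ P := dvd_span_singleton.mp ((dvd_pow_self P two_ne_zero).trans hdvd)
  exact ⟨hP, hpP, (not_isUnramifiedAt_iff_sq_dvd hp hpP).mpr hdvd⟩

end Ramification

theorem exists_sq_eq_span_squarefree {R : Type*} [CommRing R] [IsDedekindDomain R] [CharZero R]
    {J : Ideal R} {n : ℕ} (hn : n ≠ 0) (hJ : J ^ 2 = span {(n : R)}) :
    ∃ (q m : ℕ) (J' : Ideal R), q ≠ 0 ∧ Squarefree m ∧ n = q ^ 2 * m ∧
      J = span {(q : R)} * J' ∧ J' ^ 2 = span {(m : R)} := by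
  obtain ⟨m, q, -, hq, rfl, hm⟩ := Nat.sq_mul_squarefree_of_pos hn.pos
  have hspan : span {((q ^ 2 * m : ℕ) : R)} = span {(q : R)} ^ 2 * span {(m : R)} := by
    rw [span_singleton_pow, span_singleton_mul_span_singleton]
    push_cast
    rfl
  rw [hspan] at hJ
  obtain ⟨J', rfl⟩ := (UniqueFactorizationMonoid.pow_dvd_pow_iff_dvd two_ne_zero).mp ⟨_, hJ⟩
  have hq0 : span {(q : R)} ≠ ⊥ := by simpa [span_singleton_eq_bot] using hq.ne'
  rw [mul_pow] at hJ
  exact ⟨q, m, J', hq.ne', hm, rfl, rfl, mul_left_cancel₀ (pow_ne_zero 2 hq0) hJ⟩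

theorem dvd_discr_of_sq_eq_span {K : Type*} [Field K] [NumberField K] {J : Ideal (𝓞 K)} {m p : ℕ}
    (hm : Squarefree m) (hJ : J ^ 2 = span {(m : 𝓞 K)}) (hp : p.Prime) (hpm : p ∣ m) :
    (p : ℤ) ∣ NumberField.discr K := by
  obtain ⟨r, rfl⟩ := hpm
  have htop : span {(p : 𝓞 K)} ≠ ⊤ := by
    rw [ne_eq, ← absNorm_eq_one_iff, absNorm_span_natCast]
    exact (Nat.one_lt_pow (finrank_pos (R := ℤ)).ne' hp.one_lt).ne'
  obtain ⟨P, hP, hle⟩ := exists_le_maximal _ htop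
  have hdvd : P ∣ span {(p : 𝓞 K)} := dvd_iff_le.mpr hle
  have hspan : J ^ 2 = span {(p : 𝓞 K)} * span {(r : 𝓞 K)} := by
    rw [hJ, span_singleton_mul_span_singleton, Nat.cast_mul]
  have hPJ : P ^ 2 ∣ span {(p : 𝓞 K)} * span {(r : 𝓞 K)} := by
    have hprime : Prime P := prime_of_isPrime (ne_bot_of_le_ne_bot
      (by simpa [span_singleton_eq_bot] using hp.ne_zero) hle) hP.isPrime
    rw [← hspan]
    exact pow_dvd_pow_of_dvd (hprime.dvd_of_dvd_pow (hspan ▸ hdvd.mul_right _)) 2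
  have hcop : IsCoprime (P ^ 2) (span {(r : 𝓞 K)}) := by
    have := (isCoprime_span_singleton_iff _ _).mpr
      (Nat.isCoprime_iff_coprime.mpr (Nat.coprime_of_squarefree_mul hm) |>.map
        (algebraMap ℤ (𝓞 K)))
    simp only [map_natCast] at this
    exact (this.of_isCoprime_of_dvd_left hdvd).pow_left
  rw [dvd_discr_iff_exists_isPrime_sq_dvd K (Nat.prime_iff_prime_int.mp hp)]
  exact ⟨P, hP.isPrime, by exact_mod_cast hcop.dvd_of_dvd_mul_right hPJ⟩

section RamifiedPrime

variable (K : Type*) [Field K] [NumberField K]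

/-- The ramified rational primes of `K`, as the prime divisors of its discriminant. -/
abbrev RamifiedPrime : Type := (NumberField.discr K).natAbs.primeFactors

variable {K}

theorem prime_ramifiedPrime (p : RamifiedPrime K) : (p : ℕ).Prime :=
  Nat.prime_of_mem_primeFactors p.2

theorem ramifiedPrime_dvd_discr (p : RamifiedPrime K) : ((p : ℕ) : ℤ) ∣ NumberField.discr K :=
  Int.natCast_dvd.mpr (Nat.dvd_of_mem_primeFactors p.2)

/-- The squarefree number `∏ p ∈ S, p` attached to a set `S` of ramified primes; in a quadratic
field it generates the square of the ambiguous ideal of `S`. -/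
def radicand (S : Finset (RamifiedPrime K)) : ℕ := ∏ p ∈ S, (p : ℕ)

theorem radicand_ne_zero (S : Finset (RamifiedPrime K)) : radicand S ≠ 0 :=
  Finset.prod_ne_zero_iff.mpr fun p _ ↦ (prime_ramifiedPrime p).ne_zero

theorem squarefree_radicand (S : Finset (RamifiedPrime K)) : Squarefree (radicand S) := by
  refine Finset.squarefree_prod_of_pairwise_isCoprime (fun p _ q _ hpq ↦ ?_)
    fun p _ ↦ (prime_ramifiedPrime p).squarefree
  exact Nat.coprime_iff_isRelPrime.mp <|
    (Nat.coprime_primes (prime_ramifiedPrime p) (prime_ramifiedPrime q)).mpr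
      (Subtype.coe_ne_coe.mpr hpq)

theorem primeFactors_radicand (S : Finset (RamifiedPrime K)) :
    (radicand S).primeFactors = S.map (.subtype _) := by
  have hprime : ∀ p ∈ S.map (.subtype _), p.Prime := by
    intro p hp
    obtain ⟨q, -, rfl⟩ := Finset.mem_map.mp hp
    exact prime_ramifiedPrime q
  rw [← Nat.primeFactors_prod hprime, Finset.prod_map]
  rfl

theorem radicand_injective : Function.Injective (radicand (K := K)) := fun S U h ↦
  Finset.map_injective (.subtype _) (by rw [← primeFactors_radicand, h, primeFactors_radicand])

theorem exists_radicand_eq {m : ℕ} (hm : Squarefree m)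
    (hdvd : ∀ p : ℕ, p.Prime → p ∣ m → (p : ℤ) ∣ NumberField.discr K) :
    ∃ S : Finset (RamifiedPrime K), radicand S = m := by
  have hmem : ∀ p ∈ m.primeFactors, p ∈ (NumberField.discr K).natAbs.primeFactors := by
    intro p hp
    have hprime := Nat.prime_of_mem_primeFactors hp
    have hpD := hdvd p hprime (Nat.dvd_of_mem_primeFactors hp)
    exact hprime.mem_primeFactors (Int.natCast_dvd.mp hpD)
      (Int.natAbs_ne_zero.mpr (NumberField.discr_ne_zero K))
  refine ⟨m.primeFactors.subtype _, ?_⟩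
  rw [radicand, Finset.prod_subtype_of_mem (fun p ↦ p) hmem, Nat.prod_primeFactors_of_squarefree hm]

end RamifiedPrime

/-! ### The discriminant of a quadratic field -/

namespace IsFundamentalDiscriminant

variable {Δ : ℤ}

theorem not_isSquare (hΔ : IsFundamentalDiscriminant Δ) : ¬ IsSquare Δ := by
  rintro ⟨s, rfl⟩
  obtain ⟨hne, ⟨-, hsf⟩ | ⟨m, hm, -, hmod⟩⟩ := hΔ
  · exact hne (Int.isUnit_mul_self (hsf s dvd_rfl))
  · obtain ⟨r, rfl⟩ : 2 ∣ s :=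
      (Int.pow_dvd_pow_iff two_ne_zero).mp ⟨m, by rw [sq, hm]; norm_num⟩
    have hmr : m = r ^ 2 := by linarith
    rcases int_sq_emod_four r with h | h <;> omega

theorem eq_of_eq_sq_mul (hΔ : IsFundamentalDiscriminant Δ) {k D : ℤ} (h : Δ = k ^ 2 * D)
    (hD : D % 4 = 0 ∨ D % 4 = 1) : D = Δ := by
  suffices hk : k ^ 2 = 1 by rw [h, hk, one_mul]
  obtain ⟨-, ⟨-, hsf⟩ | ⟨m, hm, hsf, hmod⟩⟩ := hΔ
  · rw [sq, Int.isUnit_mul_self (hsf k ⟨D, by rw [h, sq]⟩)]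
  rcases Int.even_or_odd' k with ⟨j, rfl | rfl⟩
  · have hmj : m = j * j * D := by linarith
    rw [Int.isUnit_mul_self (hsf j ⟨D, hmj⟩), one_mul] at hmj
    omega
  · have hcop : IsCoprime ((2 * j + 1) * (2 * j + 1)) 4 :=
      IsCoprime.mul_left ⟨1 - 2 * j, j ^ 2, by ring⟩ ⟨1 - 2 * j, j ^ 2, by ring⟩
    rw [sq, Int.isUnit_mul_self (hsf _ (hcop.dvd_of_dvd_mul_left ⟨D, by rw [← hm, h, sq]⟩))]

theorem four_dvd_sq_sub_self (hΔ : IsFundamentalDiscriminant Δ) : 4 ∣ Δ ^ 2 - Δ := by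
  rw [sq, ← mul_sub_one]
  obtain ⟨-, ⟨hmod, -⟩ | ⟨m, rfl, -⟩⟩ := hΔ
  · exact Dvd.dvd.mul_left (by omega) Δ
  · exact Dvd.dvd.mul_right (dvd_mul_right 4 m) _

end IsFundamentalDiscriminant

theorem exists_ringOfIntegers_two_mul_sub_sq_eq {K : Type*} [Field K] [CharZero K] {d : ℤ}
    (hd : 4 ∣ d ^ 2 - d) {α : K} (hα : α ^ 2 = d) : ∃ ω : 𝓞 K, (2 * ω - d) ^ 2 = (d : 𝓞 K) := by
  obtain ⟨n, hn⟩ := hd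
  have hint : IsIntegral ℤ ((d + α) / 2) := by
    have hn' : (d : K) ^ 2 - d = 4 * n := by exact_mod_cast hn
    refine ⟨.X ^ 2 - .C d * .X + .C n, by monicity!, ?_⟩
    simp only [Polynomial.eval₂_add, Polynomial.eval₂_sub, Polynomial.eval₂_mul,
      Polynomial.eval₂_X_pow, Polynomial.eval₂_X, Polynomial.eval₂_C, algebraMap_int_eq,
      Int.coe_castRingHom]
    linear_combination hα / 4 - hn' / 4
  let ω : 𝓞 K := ⟨(d + α) / 2, hint⟩
  have hω : algebraMap (𝓞 K) K ω = (d + α) / 2 := rfl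
  refine ⟨ω, FaithfulSMul.algebraMap_injective (𝓞 K) K ?_⟩
  simp only [map_pow, map_sub, map_mul, map_ofNat, map_intCast, hω, ← hα]
  ring

section QuadraticField

variable {K : Type*} [Field K] [NumberField K] [IsQuadraticExtension ℚ K]

instance : IsQuadraticExtension ℤ (𝓞 K) where
  finrank_eq_two' := (RingOfIntegers.rank K).trans (IsQuadraticExtension.finrank_eq_two ℚ K)

theorem exists_sq_eq_span_of_dvd_discr {p : ℕ} (hp : p.Prime)
    (hdvd : (p : ℤ) ∣ NumberField.discr K) : ∃ P : Ideal (𝓞 K), P ^ 2 = span {(p : 𝓞 K)} := by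
  obtain ⟨P, hP, hsq⟩ :=
    (dvd_discr_iff_exists_isPrime_sq_dvd K (Nat.prime_iff_prime_int.mp hp)).mp hdvd
  rw [Int.cast_natCast] at hsq
  refine ⟨P, ?_⟩
  have hnorm : absNorm (span {(p : 𝓞 K)}) = p ^ 2 := by
    rw [absNorm_span_natCast, RingOfIntegers.rank, IsQuadraticExtension.finrank_eq_two]
  have hdvd := map_dvd absNorm hsq
  rw [hnorm, map_pow, Nat.pow_dvd_pow_iff two_ne_zero] at hdvd
  have hP1 : absNorm P ≠ 1 := fun h ↦ hP.ne_top (absNorm_eq_one_iff.mp h)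
  obtain ⟨J, hJ⟩ := hsq
  have hJ1 : absNorm J = 1 := by
    have hmul := congrArg absNorm hJ
    rw [hnorm, map_mul, map_pow, ((Nat.dvd_prime hp).mp hdvd).resolve_left hP1] at hmul
    exact (Nat.eq_of_mul_eq_mul_left (pow_pos hp.pos 2) (by rw [← hmul, mul_one])).symm
  rw [hJ, absNorm_eq_one_iff.mp hJ1, mul_top]

theorem exists_discr_pair_eq_sq_mul (x y : 𝓞 K) :
    ∃ k : ℤ, Algebra.discr ℤ ![x, y] = k ^ 2 * NumberField.discr K := by
  let b : Basis (Fin 2) ℤ (𝓞 K) :=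
    finBasisOfFinrankEq ℤ (𝓞 K) (IsQuadraticExtension.finrank_eq_two ℤ (𝓞 K))
  refine ⟨(b.toMatrix ![x, y]).det, ?_⟩
  rw [← NumberField.discr_eq_discr K b, ← Algebra.discr_of_matrix_vecMul,
    Basis.toMatrix_map_vecMul]

variable (K) in
theorem discr_emod_four : NumberField.discr K % 4 = 0 ∨ NumberField.discr K % 4 = 1 := by
  let b : Basis (Fin 2) ℤ (𝓞 K) :=
    finBasisOfFinrankEq ℤ (𝓞 K) (IsQuadraticExtension.finrank_eq_two ℤ (𝓞 K))
  have hb : ⇑b = ![b 0, b 1] := List.ofFn_inj.mp rfl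
  rw [← NumberField.discr_eq_discr K b, hb, discr_pair]
  generalize trace ℤ (𝓞 K) (b 0) * trace ℤ (𝓞 K) (b 1) - trace ℤ (𝓞 K) (b 0 * b 1) = s
  rw [mul_assoc, Int.sub_mul_emod_self_left]
  exact int_sq_emod_four s

theorem trace_eq_zero_of_sq_eq_intCast {d : ℤ} (hd : ¬ IsSquare d) {a : 𝓞 K}
    (ha : a ^ 2 = d) : trace ℤ (𝓞 K) a = 0 := by
  by_contra htrace
  have hlin : (trace ℤ (𝓞 K) a : 𝓞 K) * a = norm ℤ a + d := by
    have h := mul_trace_sub_self ℤ a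
    simp only [eq_intCast] at h
    linear_combination h + ha
  have hsq : trace ℤ (𝓞 K) a ^ 2 * d = (norm ℤ a + d) ^ 2 := by
    have : ((trace ℤ (𝓞 K) a ^ 2 * d : ℤ) : 𝓞 K) = ((norm ℤ a + d) ^ 2 : ℤ) := by
      push_cast
      rw [← hlin, ← ha, mul_pow]
    exact_mod_cast this
  obtain ⟨c, hc⟩ := (Int.pow_dvd_pow_iff two_ne_zero).mp ⟨d, hsq.symm⟩
  refine hd ⟨c, mul_left_cancel₀ (pow_ne_zero 2 htrace) ?_⟩
  rw [hsq, hc, mul_pow, sq c]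

theorem IsFundamentalDiscriminant.discr_eq_of_sq_eq {Δ : ℤ} (hΔ : IsFundamentalDiscriminant Δ)
    {α : K} (hα : α ^ 2 = Δ) : NumberField.discr K = Δ := by
  obtain ⟨ω, hω⟩ := exists_ringOfIntegers_two_mul_sub_sq_eq hΔ.four_dvd_sq_sub_self hα
  have htrace : trace ℤ (𝓞 K) ω = Δ := by
    have h := trace_eq_zero_of_sq_eq_intCast hΔ.not_isSquare hω
    have h2 := trace_algebraMap_mul ℤ 2 ω
    have hΔ' := trace_algebraMap_eq_two_mul ℤ (𝓞 K) Δ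
    simp only [eq_intCast, map_sub, Int.cast_ofNat] at h h2 hΔ'
    linarith
  have hnorm : 4 * norm ℤ ω = Δ ^ 2 - Δ := by
    have h := mul_trace_sub_self ℤ ω
    rw [htrace, eq_intCast, eq_intCast] at h
    have : ((4 * norm ℤ ω : ℤ) : 𝓞 K) = (Δ ^ 2 - Δ : ℤ) := by
      push_cast
      linear_combination -4 * h - hω
    exact_mod_cast this
  obtain ⟨k, hk⟩ := exists_discr_pair_eq_sq_mul 1 ω
  rw [discr_one_pair, htrace, hnorm, sub_sub_cancel] at hk
  exact hΔ.eq_of_eq_sq_mul hk (discr_emod_four K)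

/-! ### Imaginary quadratic fields -/

theorem trace_sq_le_four_mul_norm (hneg : NumberField.discr K < 0) (x : 𝓞 K) :
    trace ℤ (𝓞 K) x ^ 2 ≤ 4 * norm ℤ x := by
  obtain ⟨k, hk⟩ := exists_discr_pair_eq_sq_mul 1 x
  rw [discr_one_pair] at hk
  nlinarith [mul_nonpos_of_nonneg_of_nonpos (sq_nonneg k) hneg.le]

theorem norm_nonneg_of_discr_neg (hneg : NumberField.discr K < 0) (x : 𝓞 K) : 0 ≤ norm ℤ x := by
  linarith [trace_sq_le_four_mul_norm hneg x, sq_nonneg (trace ℤ (𝓞 K) x)]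

theorem finite_units_of_discr_neg (hneg : NumberField.discr K < 0) : Finite (𝓞 K)ˣ := by
  have hodd : Odd (InfinitePlace.nrComplexPlaces K) := by
    have := NumberField.sign_discr K
    rw [Int.sign_eq_neg_one_of_neg hneg] at this
    exact (neg_one_pow_eq_neg_one_iff_odd (by norm_num)).mp this.symm
  have hrank : Units.rank K = 0 := by
    have hplaces := InfinitePlace.card_add_two_mul_card_eq_rank K
    have hcard := InfinitePlace.card_eq_nrRealPlaces_add_nrComplexPlaces K
    rw [IsQuadraticExtension.finrank_eq_two] at hplaces
    have := hodd.pos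
    rw [Units.rank]
    lia
  have : IsEmpty (Fin (Units.rank K)) := by rw [hrank]; infer_instance
  have htop := Units.closure_fundSystem_sup_torsion_eq_top K
  rw [Set.range_eq_empty, Subgroup.closure_empty, bot_sup_eq] at htop
  exact (Subgroup.topEquiv (G := (𝓞 K)ˣ)).toEquiv.finite_iff.mp (htop ▸ inferInstance)

theorem card_units_quotient_squares (hneg : NumberField.discr K < 0) :
    Nat.card ((𝓞 K)ˣ ⧸ (powMonoidHom 2 : (𝓞 K)ˣ →* (𝓞 K)ˣ).range) = 2 := by
  have := finite_units_of_discr_neg hneg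
  rw [card_quotient_range_powMonoidHom, card_ker_sq_units]

theorem isSquare_of_sq_eq_natCast (hneg : NumberField.discr K < 0) {z : 𝓞 K} {n : ℕ}
    (hz : z ^ 2 = n) : IsSquare n := by
  have hnorm : norm ℤ z = n := by
    have h := congrArg (norm ℤ) hz
    rw [map_pow, ← map_natCast (algebraMap ℤ (𝓞 K)), Algebra.norm_algebraMap,
      IsQuadraticExtension.finrank_eq_two] at h
    exact (pow_left_inj₀ (norm_nonneg_of_discr_neg hneg z) n.cast_nonneg two_ne_zero).mp h
  have htrace : trace ℤ (𝓞 K) z ^ 2 = 4 * n := by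
    have h := trace_sq ℤ z
    rw [hz, ← map_natCast (algebraMap ℤ (𝓞 K)), trace_algebraMap_eq_two_mul, hnorm] at h
    linarith
  obtain ⟨s, hs⟩ : 2 ∣ trace ℤ (𝓞 K) z :=
    (Int.pow_dvd_pow_iff two_ne_zero).mp ⟨n, by rw [htrace]; norm_num⟩
  rw [hs] at htrace
  exact Int.isSquare_natCast_iff.mp ⟨s, by linarith⟩

-- Hilbert 90 for `b / k`: take `w` conjugate to `b + k`, or of trace zero if `b = -k`.
theorem exists_mul_sq_eq_natCast (hneg : NumberField.discr K < 0) {b : 𝓞 K} {k : ℕ} (hk : k ≠ 0)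
    (hb : norm ℤ b = k ^ 2) : ∃ w : 𝓞 K, w ≠ 0 ∧ ∃ n : ℕ, n ≠ 0 ∧ b * w ^ 2 = n := by
  suffices h : ∃ x w : 𝓞 K, x ≠ 0 ∧ x * w = norm ℤ x ∧ b * w = k * x by
    obtain ⟨x, w, hx, hnorm, hbw⟩ := h
    have hx' : norm ℤ x ≠ 0 := norm_ne_zero_iff.mpr hx
    refine ⟨w, ?_, k * (norm ℤ x).natAbs, mul_ne_zero hk (Int.natAbs_ne_zero.mpr hx'), ?_⟩
    · rintro rfl
      exact hx' (by exact_mod_cast (mul_zero x).symm.trans hnorm |>.symm)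
    · rw [Nat.cast_mul, Nat.cast_natAbs, abs_of_nonneg (norm_nonneg_of_discr_neg hneg x),
        ← hnorm, sq, ← mul_assoc, hbw, mul_assoc]
  by_cases hbk : b + k = 0
  · obtain ⟨x, hx, htr⟩ := exists_ne_zero_trace_eq_zero ℤ (𝓞 K)
    have hN := mul_trace_sub_self ℤ x
    rw [htr, map_zero, zero_sub, eq_intCast] at hN
    exact ⟨x, -x, hx, hN, by linear_combination -x * hbk⟩
  · have hT : trace ℤ (𝓞 K) (b + k) = trace ℤ (𝓞 K) b + 2 * k := by
      rw [map_add, ← trace_algebraMap_eq_two_mul ℤ (𝓞 K) k, map_natCast (algebraMap ℤ (𝓞 K))]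
    refine ⟨b + k, trace ℤ (𝓞 K) (b + k) - (b + k), hbk, mul_trace_sub_self ℤ (b + k), ?_⟩
    have hNb := mul_trace_sub_self ℤ b
    rw [hb, eq_intCast, eq_intCast] at hNb
    rw [hT]
    push_cast at hNb ⊢
    linear_combination hNb

theorem exists_mk0_eq_and_sq_eq_span (hneg : NumberField.discr K < 0) {c : ClassGroup (𝓞 K)}
    (hc : c ^ 2 = 1) : ∃ (J : (Ideal (𝓞 K))⁰) (n : ℕ), n ≠ 0 ∧ ClassGroup.mk0 J = c ∧
      (J : Ideal (𝓞 K)) ^ 2 = span {(n : 𝓞 K)} := by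
  obtain ⟨I, rfl⟩ := ClassGroup.mk0_surjective c
  obtain ⟨b, hb⟩ : ∃ b, (I : Ideal (𝓞 K)) ^ 2 = span {b} := by
    rw [← map_pow, ClassGroup.mk0_eq_one_iff] at hc
    exact hc.principal
  have hI : absNorm (I : Ideal (𝓞 K)) ≠ 0 := absNorm_ne_zero_of_nonZeroDivisors I
  have hnorm : norm ℤ b = (absNorm (I : Ideal (𝓞 K)) : ℤ) ^ 2 := by
    rw [← Int.natAbs_of_nonneg (norm_nonneg_of_discr_neg hneg b), ← absNorm_span_singleton, ← hb,
      map_pow, Nat.cast_pow]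
  obtain ⟨w, hw, n, hn, hbw⟩ := exists_mul_sq_eq_natCast hneg hI hnorm
  let W : (Ideal (𝓞 K))⁰ := ⟨span {w}, by simpa using hw⟩
  refine ⟨W * I, n, hn, ?_, ?_⟩
  · rw [map_mul, ClassGroup.mk0_eq_one_iff W.2 |>.mpr ⟨w, rfl⟩, one_mul]
  · rw [Submonoid.coe_mul, mul_pow, hb, span_singleton_pow, span_singleton_mul_span_singleton,
      mul_comm, hbw]

/-! ### Ambiguous ideals -/

/-- The prime ideal above a ramified prime of a quadratic field, chosen as a square root of the
ideal which that prime generates. -/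
noncomputable def ramifiedIdeal (p : RamifiedPrime K) : Ideal (𝓞 K) :=
  (exists_sq_eq_span_of_dvd_discr (prime_ramifiedPrime p) (ramifiedPrime_dvd_discr p)).choose

theorem ramifiedIdeal_sq (p : RamifiedPrime K) :
    ramifiedIdeal p ^ 2 = span {((p : ℕ) : 𝓞 K)} :=
  (exists_sq_eq_span_of_dvd_discr (prime_ramifiedPrime p) (ramifiedPrime_dvd_discr p)).choose_spec

theorem ramifiedIdeal_mem_nonZeroDivisors (p : RamifiedPrime K) :
    ramifiedIdeal p ∈ (Ideal (𝓞 K))⁰ := by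
  refine mem_nonZeroDivisors_of_ne_zero ((pow_ne_zero_iff two_ne_zero).mp ?_)
  rw [ramifiedIdeal_sq]
  simpa using (prime_ramifiedPrime p).ne_zero

/-- The ideal class of the prime above a ramified prime. -/
noncomputable def ramifiedClass (p : RamifiedPrime K) : ClassGroup (𝓞 K) :=
  ClassGroup.mk0 ⟨ramifiedIdeal p, ramifiedIdeal_mem_nonZeroDivisors p⟩

/-- The product of the prime ideals above the ramified primes in `S`: up to rational factors these
are the ideals invariant under conjugation. It is bundled as a nonzero ideal, so that it has a
class. -/
noncomputable def ambiguousIdeal (S : Finset (RamifiedPrime K)) : (Ideal (𝓞 K))⁰ :=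
  ∏ p ∈ S, ⟨ramifiedIdeal p, ramifiedIdeal_mem_nonZeroDivisors p⟩

theorem ambiguousIdeal_sq (S : Finset (RamifiedPrime K)) :
    (ambiguousIdeal S : Ideal (𝓞 K)) ^ 2 = span {(radicand S : 𝓞 K)} := by
  rw [ambiguousIdeal, Submonoid.coe_finsetProd, ← Finset.prod_pow,
    Finset.prod_congr rfl fun p _ ↦ ramifiedIdeal_sq p, prod_span_singleton, radicand,
    Nat.cast_prod]

theorem mk0_ambiguousIdeal (S : Finset (RamifiedPrime K)) :
    ClassGroup.mk0 (ambiguousIdeal S) = ∏ p ∈ S, ramifiedClass p :=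
  map_prod ClassGroup.mk0 _ S

theorem ramifiedClass_sq (p : RamifiedPrime K) : ramifiedClass p ^ 2 = 1 := by
  rw [ramifiedClass, ← map_pow, ClassGroup.mk0_eq_one_iff]
  exact ⟨_, ramifiedIdeal_sq p⟩

theorem exists_eq_span_mul_ambiguousIdeal {J : Ideal (𝓞 K)} {n : ℕ} (hn : n ≠ 0)
    (hJ : J ^ 2 = span {(n : 𝓞 K)}) : ∃ (q : ℕ) (S : Finset (RamifiedPrime K)), q ≠ 0 ∧
      n = q ^ 2 * radicand S ∧ J = span {(q : 𝓞 K)} * ambiguousIdeal S := by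
  obtain ⟨q, m, J', hq, hm, hnq, rfl, hJ'⟩ := exists_sq_eq_span_squarefree hn hJ
  obtain ⟨S, rfl⟩ := exists_radicand_eq hm fun p ↦ dvd_discr_of_sq_eq_span hm hJ'
  rw [← ambiguousIdeal_sq, pow_left_inj two_ne_zero] at hJ'
  exact ⟨q, S, hq, hnq, by rw [hJ']⟩

theorem exists_prod_ramifiedClass_eq (hneg : NumberField.discr K < 0) {c : ClassGroup (𝓞 K)}
    (hc : c ^ 2 = 1) : ∃ S : Finset (RamifiedPrime K), ∏ p ∈ S, ramifiedClass p = c := by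
  obtain ⟨J, n, hn, rfl, hJ⟩ := exists_mk0_eq_and_sq_eq_span hneg hc
  obtain ⟨q, S, hq, -, hJS⟩ := exists_eq_span_mul_ambiguousIdeal hn hJ
  refine ⟨S, ?_⟩
  rw [← mk0_ambiguousIdeal, ClassGroup.mk0_eq_mk0_iff]
  exact ⟨q, 1, Nat.cast_ne_zero.mpr hq, one_ne_zero, by rw [← hJS, span_singleton_one, top_mul]⟩

theorem prod_ramifiedClass_eq_one_iff (S : Finset (RamifiedPrime K)) :
    ∏ p ∈ S, ramifiedClass p = 1 ↔ ∃ (ε : (𝓞 K)ˣ) (a : 𝓞 K), ε * a ^ 2 = radicand S := by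
  have hspan (a : 𝓞 K) : (ambiguousIdeal S : Ideal (𝓞 K)) = span {a} ↔
      ∃ ε : (𝓞 K)ˣ, ε * a ^ 2 = radicand S := by
    rw [← pow_left_inj two_ne_zero, ambiguousIdeal_sq, span_singleton_pow, eq_comm,
      span_singleton_eq_span_singleton]
    exact exists_congr fun ε ↦ by rw [mul_comm]
  rw [← mk0_ambiguousIdeal, ClassGroup.mk0_eq_one_iff, exists_comm]
  exact ⟨fun h ↦ h.principal.imp fun a ↦ (hspan a).mp, fun ⟨a, h⟩ ↦ ⟨a, (hspan a).mpr h⟩⟩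

theorem exists_unit_mul_sq_eq_radicand (hneg : NumberField.discr K < 0) (ε : (𝓞 K)ˣ) :
    ∃ (S : Finset (RamifiedPrime K)) (a : 𝓞 K), ε * a ^ 2 = radicand S := by
  have hnorm : norm ℤ (ε : 𝓞 K) = (1 : ℕ) ^ 2 := by
    have h := Int.isUnit_iff_natAbs_eq.mp (ε.isUnit.map (norm ℤ))
    have := norm_nonneg_of_discr_neg hneg (ε : 𝓞 K)
    lia
  obtain ⟨w, -, n, hn, hw⟩ := exists_mul_sq_eq_natCast hneg one_ne_zero hnorm
  have hspan : span {w} ^ 2 = span {(n : 𝓞 K)} := by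
    rw [span_singleton_pow, span_singleton_eq_span_singleton]
    exact ⟨ε, by rw [mul_comm, hw]⟩
  obtain ⟨q, S, hq, hnq, hwS⟩ := exists_eq_span_mul_ambiguousIdeal hn hspan
  obtain ⟨a, rfl⟩ : (q : 𝓞 K) ∣ w :=
    span_singleton_le_span_singleton.mp (dvd_iff_le.mp ⟨_, hwS⟩)
  refine ⟨S, a, mul_left_cancel₀ (pow_ne_zero 2 (Nat.cast_ne_zero.mpr hq : (q : 𝓞 K) ≠ 0)) ?_⟩
  rw [hnq] at hw
  push_cast at hw
  linear_combination hw

theorem eq_iff_mk_eq_of_unit_mul_sq_eq_radicand (hneg : NumberField.discr K < 0)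
    {S U : Finset (RamifiedPrime K)} {ε η : (𝓞 K)ˣ} {a b : 𝓞 K}
    (hε : ε * a ^ 2 = radicand S) (hη : η * b ^ 2 = radicand U) :
    S = U ↔ (ε : (𝓞 K)ˣ ⧸ (powMonoidHom 2 : (𝓞 K)ˣ →* (𝓞 K)ˣ).range) = η := by
  have hb : b ≠ 0 := by
    rintro rfl
    rw [zero_pow two_ne_zero, mul_zero] at hη
    exact radicand_ne_zero U (Nat.cast_eq_zero.mp hη.symm)
  rw [QuotientGroup.eq]
  constructor
  · rintro rfl
    obtain ⟨v, rfl⟩ := exists_eq_mul_sq_of_mul_sq_eq hb (hε.trans hη.symm)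
    exact ⟨v, (inv_mul_cancel_left ε _).symm⟩
  · rintro ⟨u, hu⟩
    obtain rfl : ε * u ^ 2 = η := eq_inv_mul_iff_mul_eq.mp hu
    refine radicand_injective (eq_of_squarefree_of_isSquare_mul (squarefree_radicand S)
      (squarefree_radicand U) (isSquare_of_sq_eq_natCast hneg (z := ε * u * a * b) ?_))
    rw [Nat.cast_mul, ← hε, ← hη]
    push_cast
    ring

theorem card_prod_ramifiedClass_eq_one (hneg : NumberField.discr K < 0) :
    Nat.card {S : Finset (RamifiedPrime K) // ∏ p ∈ S, ramifiedClass p = 1} = 2 := by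
  choose ε a hε using fun S : {S : Finset (RamifiedPrime K) // ∏ p ∈ S, ramifiedClass p = 1} ↦
    (prod_ramifiedClass_eq_one_iff S.1).mp S.2
  rw [← card_units_quotient_squares hneg]
  refine Nat.card_eq_of_bijective (fun S ↦ (ε S : (𝓞 K)ˣ ⧸ _)) ⟨fun S U h ↦ ?_, fun x ↦ ?_⟩
  · exact Subtype.ext ((eq_iff_mk_eq_of_unit_mul_sq_eq_radicand hneg (hε S) (hε U)).mpr h)
  · obtain ⟨η, rfl⟩ := QuotientGroup.mk_surjective x
    obtain ⟨S, b, hη⟩ := exists_unit_mul_sq_eq_radicand hneg η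
    let S' : {S : Finset (RamifiedPrime K) // ∏ p ∈ S, ramifiedClass p = 1} :=
      ⟨S, (prod_ramifiedClass_eq_one_iff S).mpr ⟨η, b, hη⟩⟩
    exact ⟨S', (eq_iff_mk_eq_of_unit_mul_sq_eq_radicand hneg (hε S') hη).mp rfl⟩

theorem two_mul_card_ker_sq_classGroup (hneg : NumberField.discr K < 0) :
    2 * Nat.card (powMonoidHom 2 : ClassGroup (𝓞 K) →* ClassGroup (𝓞 K)).ker =
      2 ^ (NumberField.discr K).natAbs.primeFactors.card := by
  have hcard := card_prod_eq_one_mul_card_ker_sq (G := ClassGroup (𝓞 K)) ramifiedClass_sq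
    fun c ↦ exists_prod_ramifiedClass_eq hneg
  rwa [card_prod_ramifiedClass_eq_one hneg, Fintype.card_coe] at hcard

end QuadraticField

end

/-- Let `Δ < 0` be a fundamental discriminant, `K = ℚ(√Δ)` (formalized as any degree-2
number field containing a square root of `Δ`), and let `t` be the number of distinct prime
divisors of `Δ` (equivalently, the number of prime discriminants in the factorization of
`Δ`). Then the quotient `Cl(K)/Cl(K)²` of the ideal class group of `K` by its subgroup of
squares has order `2^(t−1)`. -/
theorem card_classGroup_quotient_squares
    (Δ : ℤ) (hΔ : IsFundamentalDiscriminant Δ) (hneg : Δ < 0)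
    (K : Type) [Field K] [NumberField K]
    (hdeg : Module.finrank ℚ K = 2)
    (α : K) (hα : α ^ 2 = (Δ : K))
    (t : ℕ) (ht : t = Δ.natAbs.primeFactors.card) :
    Nat.card
      (ClassGroup (𝓞 K) ⧸
        (powMonoidHom 2 : ClassGroup (𝓞 K) →* ClassGroup (𝓞 K)).range) = 2 ^ (t - 1) := by
  have : Algebra.IsQuadraticExtension ℚ K := ⟨hdeg⟩
  have hdiscr : NumberField.discr K = Δ := hΔ.discr_eq_of_sq_eq hα
  have hcard := two_mul_card_ker_sq_classGroup (hdiscr.trans_lt hneg)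
  rw [hdiscr, ← ht] at hcard
  have ht0 : t ≠ 0 := by
    rintro rfl
    omega
  rw [card_quotient_range_powMonoidHom]
  exact Nat.eq_of_mul_eq_mul_left two_pos (hcard.trans (mul_pow_sub_one ht0 2).symm)
end

section
/- (Principal Genus Theorem for imaginary quadratic fields) Let Δ < 0 be a fundamental discriminant with factorization Δ = Δ₁ ⋯ Δ_t into prime discriminants, and let K = ℚ(√Δ). An ideal class c in the ideal class group Cl(K) is a square if and only if for every nonzero ideal 𝔞 of O_K belonging to c and coprime to Δ, the Kronecker symbols (Δ_j / N𝔞) equal 1 for all j = 1, …, t, where N𝔞 denotes the absolute norm of 𝔞. -/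
open NumberField nonZeroDivisors

/-- A prime discriminant is a fundamental discriminant having exactly one prime factor. -/
def IsPrimeDiscriminant (Δ : ℤ) : Prop :=
  IsFundamentalDiscriminant Δ ∧ Δ.natAbs.primeFactors.card = 1

/-- The Kronecker symbol `(a/b)` for a positive integer `b`: it is the Jacobi symbol on the
odd part of `b`, extended multiplicatively to the prime `2` via the character `χ₈`
(so `(a/2) = 0, 1, −1` according as `a` is even, `a ≡ ±1 (mod 8)`, `a ≡ ±3 (mod 8)`). -/
noncomputable def kroneckerSym (a : ℤ) (b : ℕ) : ℤ :=
  (ZMod.χ₈ (a : ZMod 8)) ^ (b.factorization 2) * jacobiSym a (b / 2 ^ (b.factorization 2))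

/-!
Let `I` be an ideal coprime to `Δ`, of norm `n`. Both sides of the theorem are equivalent to `n`
being a norm from `K`, that is, to `x² - Δ y² = n` having a rational solution.

* For a quadratic field, two ideals `A`, `C` of the same norm satisfy `A · σA = C · σC`, and then
  `A · σB = σC · B` for `B = A + C`. As `J · σJ` is always principal, this gives
  `[A] [C] = [B]²`. If `n = |N(u / v)|`, applying this to `A = (u)` and `C = (v) I` shows that
  `[I]` is a square; the converse is immediate.
* A rational solution can be taken primitive at a prime `p ∣ Δ`; its reduction modulo `p` (modulo
  `4` or `8` if `p = 2`) shows that the genus characters take the value `1` at `n`. Conversely,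
  `Δ` is a square modulo every prime dividing `n` to an odd power, and trivial genus characters
  make `n` a square modulo every odd prime dividing `Δ`. Since `Δ < 0`, Legendre's theorem on the
  conic `x² + b y² = c`, proved by Thue's pigeonhole argument, yields a rational solution.
-/

section LegendreEquation

lemma isSquare_intCast_zmod_of_squarefree (a : ℤ) {b : ℕ} (hb : Squarefree b)
    (h : ∀ p : ℕ, p.Prime → p ∣ b → IsSquare (a : ZMod p)) : IsSquare (a : ZMod b) := by
  induction b using Nat.recOnPosPrimePosCoprime with
  | zero => exact absurd hb not_squarefree_zero
  | one => exact ⟨0, Subsingleton.elim _ _⟩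
  | prime_pow p k hp hk =>
    obtain rfl : k = 1 := (Nat.squarefree_pow_iff hp.ne_one hk.ne').1 hb |>.2
    rw [pow_one]
    exact h p hp (dvd_pow_self p one_ne_zero)
  | coprime b c _ _ hbc ihb ihc =>
    obtain ⟨s, hs⟩ := ihb (hb.squarefree_of_dvd (dvd_mul_right b c))
      fun p hp hpb ↦ h p hp (hpb.mul_right c)
    obtain ⟨t, ht⟩ := ihc (hb.squarefree_of_dvd (dvd_mul_left c b))
      fun p hp hpc ↦ h p hp (hpc.mul_left b)
    have hst : IsSquare (a : ZMod b × ZMod c) := ⟨(s, t), Prod.ext hs ht⟩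
    simpa using hst.map (ZMod.chineseRemainder hbc).symm

lemma exists_ne_zero_map_eq_zero_and_abs_le {ι G : Type*} [Fintype ι] [AddCommGroup G] [Finite G]
    (f : (ι → ℤ) →+ G) (bound : ι → ℕ) (hcard : Nat.card G < ∏ i, (bound i + 1)) :
    ∃ v : ι → ℤ, v ≠ 0 ∧ f v = 0 ∧ ∀ i, |v i| ≤ bound i := by
  classical
  have := Fintype.ofFinite G
  obtain ⟨u, w, huw, hf⟩ := Fintype.exists_ne_map_eq_of_card_lt
    (fun u : (i : ι) → Fin (bound i + 1) ↦ f fun i ↦ (u i : ℤ))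
    (by rw [← Nat.card_eq_fintype_card]; simpa using hcard)
  refine ⟨(fun i ↦ (u i : ℤ)) - fun i ↦ (w i : ℤ), ?_, ?_, fun i ↦ ?_⟩
  · contrapose! huw
    exact funext fun i ↦ Fin.ext (by exact_mod_cast congrFun (sub_eq_zero.1 huw) i)
  · rw [map_sub, hf, sub_self]
  · rw [Pi.sub_apply, abs_le]
    have := (u i).is_lt
    have := (w i).is_lt
    omega

lemma mul_lt_sqrt_succ_mul_sqrt_succ_mul_sqrt_succ (b c : ℕ) :
    b * c < ((b * c).sqrt + 1) * (c.sqrt + 1) * (b.sqrt + 1) := by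
  refine lt_of_pow_lt_pow_left₀ 2 (Nat.zero_le _) ?_
  calc (b * c) ^ 2 = b * c * (c * b) := by ring
    _ < ((b * c).sqrt + 1) ^ 2 * ((c.sqrt + 1) ^ 2 * (b.sqrt + 1) ^ 2) :=
      Nat.mul_lt_mul'' (Nat.lt_succ_sqrt' _)
        (Nat.mul_lt_mul'' (Nat.lt_succ_sqrt' _) (Nat.lt_succ_sqrt' _))
    _ = _ := by ring

lemma exists_small_zero_legendre_mod {b c : ℕ} (hb : b ≠ 0) (hc : c ≠ 0) (hbc : b.Coprime c)
    (hbsq : IsSquare (-b : ZMod c)) (hcsq : IsSquare (c : ZMod b)) :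
    ∃ x y z : ℤ, (x ≠ 0 ∨ y ≠ 0 ∨ z ≠ 0) ∧ (b * c : ℤ) ∣ x ^ 2 + b * y ^ 2 - c * z ^ 2 ∧
      |x| ≤ (b * c).sqrt ∧ |y| ≤ c.sqrt ∧ |z| ≤ b.sqrt := by
  have : NeZero b := ⟨hb⟩
  have : NeZero c := ⟨hc⟩
  obtain ⟨r, hr⟩ := hbsq
  obtain ⟨s, hs⟩ := hcsq
  let f : (Fin 3 → ℤ) →+ ZMod b × ZMod c :=
    { toFun v := (v 0 - s * v 2, v 0 - r * v 1)
      map_zero' := by simp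
      map_add' v w := by ext <;> simp <;> ring }
  obtain ⟨v, hv, hfv, hbound⟩ := exists_ne_zero_map_eq_zero_and_abs_le f
    ![(b * c).sqrt, c.sqrt, b.sqrt]
    (by simpa [Fin.prod_univ_three] using mul_lt_sqrt_succ_mul_sqrt_succ_mul_sqrt_succ b c)
  have hmodb : (v 0 : ZMod b) - s * v 2 = 0 := congrArg Prod.fst hfv
  have hmodc : (v 0 : ZMod c) - r * v 1 = 0 := congrArg Prod.snd hfv
  refine ⟨v 0, v 1, v 2, ?_, ?_, hbound 0, hbound 1, hbound 2⟩
  · contrapose! hv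
    ext i
    fin_cases i
    exacts [hv.1, hv.2.1, hv.2.2]
  · refine (Nat.isCoprime_iff_coprime.2 hbc).mul_dvd ?_ ?_ <;>
      rw [← ZMod.intCast_zmod_eq_zero_iff_dvd] <;> push_cast <;> rw [ZMod.natCast_self]
    · linear_combination (v 0 + s * v 2 : ZMod b) * hmodb - (v 2 : ZMod b) ^ 2 * hs
    · linear_combination (v 0 + r * v 1 : ZMod c) * hmodc - (v 1 : ZMod c) ^ 2 * hr

lemma sq_lt_of_abs_le_sqrt {n : ℕ} (hn : Squarefree n) (hn1 : n ≠ 1) {x : ℤ}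
    (hx : |x| ≤ n.sqrt) : x ^ 2 < n := by
  have hle : x.natAbs ^ 2 ≤ n := Nat.le_sqrt'.1 (by zify; exact hx)
  have hne : x.natAbs ^ 2 ≠ n := by
    rintro rfl
    exact hn1 (by rw [Nat.isUnit_iff.1 (hn x.natAbs (sq x.natAbs).symm.dvd), one_pow])
  zify at hle hne
  rw [sq_abs] at hle hne
  exact lt_of_le_of_ne hle hne

lemma exists_zero_or_mul_eq_legendre {b c : ℕ} (hb : Squarefree b) (hb1 : b ≠ 1)
    (hc : Squarefree c) (hc1 : c ≠ 1) (hbc : b.Coprime c)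
    (hbsq : IsSquare (-b : ZMod c)) (hcsq : IsSquare (c : ZMod b)) :
    ∃ x y z : ℤ, (x ≠ 0 ∨ y ≠ 0 ∨ z ≠ 0) ∧
      (x ^ 2 + b * y ^ 2 - c * z ^ 2 = 0 ∨ x ^ 2 + b * y ^ 2 - c * z ^ 2 = b * c) := by
  obtain ⟨x, y, z, hne, ⟨k, hk⟩, hx, hy, hz⟩ :=
    exists_small_zero_legendre_mod hb.ne_zero hc.ne_zero hbc hbsq hcsq
  refine ⟨x, y, z, hne, ?_⟩
  have hb0 : (0 : ℤ) < b := by exact_mod_cast hb.ne_zero.bot_lt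
  have hc0 : (0 : ℤ) < c := by exact_mod_cast hc.ne_zero.bot_lt
  have hx2 : x ^ 2 < b * c := by
    exact_mod_cast sq_lt_of_abs_le_sqrt (Nat.squarefree_mul hbc |>.2 ⟨hb, hc⟩)
      (fun h ↦ hb1 (Nat.eq_one_of_mul_eq_one_right h)) hx
  have hy2 : b * y ^ 2 < b * c := mul_lt_mul_of_pos_left (sq_lt_of_abs_le_sqrt hc hc1 hy) hb0
  have hz2 : c * z ^ 2 < c * b := mul_lt_mul_of_pos_left (sq_lt_of_abs_le_sqrt hb hb1 hz) hc0
  have hbc0 : (0 : ℤ) < b * c := mul_pos hb0 hc0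
  have hk_lt : k < 2 := lt_of_mul_lt_mul_left (a := (b * c : ℤ))
    (by nlinarith [sq_nonneg z]) hbc0.le
  have hk_gt : -1 < k := lt_of_mul_lt_mul_left (a := (b * c : ℤ))
    (by nlinarith [sq_nonneg x, sq_nonneg y]) hbc0.le
  obtain rfl | rfl : k = 0 ∨ k = 1 := by omega
  · exact Or.inl (by rw [hk, mul_zero])
  · exact Or.inr (by rw [hk, mul_one])

lemma exists_rat_sq_add_mul_sq_eq_of_int {b c x y z : ℤ} (hz : z ≠ 0)
    (h : x ^ 2 + b * y ^ 2 = c * z ^ 2) : ∃ x y : ℚ, x ^ 2 + b * y ^ 2 = c := by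
  have hz' : (z : ℚ) ≠ 0 := Int.cast_ne_zero.2 hz
  have h' : (x : ℚ) ^ 2 + b * y ^ 2 = c * z ^ 2 := by exact_mod_cast h
  refine ⟨x / z, y / z, ?_⟩
  field_simp
  linear_combination h'

theorem exists_rat_sq_add_mul_sq_eq {b c : ℕ} (hb : Squarefree b) (hc : Squarefree c)
    (hbc : b.Coprime c) (hbsq : IsSquare (-b : ZMod c)) (hcsq : IsSquare (c : ZMod b)) :
    ∃ x y : ℚ, x ^ 2 + b * y ^ 2 = c := by
  obtain rfl | hc1 := eq_or_ne c 1
  · exact ⟨1, 0, by simp⟩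
  obtain rfl | hb1 := eq_or_ne b 1
  · obtain ⟨x, y, h⟩ := Nat.eq_sq_add_sq_of_isSquare_mod_neg_one (by simpa using hbsq)
    exact ⟨x, y, by rw [h]; push_cast; ring⟩
  obtain ⟨x, y, z, hne, h⟩ := exists_zero_or_mul_eq_legendre hb hb1 hc hc1 hbc hbsq hcsq
  have hb0 : (0 : ℤ) < b := by exact_mod_cast hb.ne_zero.bot_lt
  rcases h with h | h
  · refine exists_rat_sq_add_mul_sq_eq_of_int (z := z) ?_ (sub_eq_zero.1 h)
    rintro rfl
    have hx : x = 0 := by nlinarith [sq_nonneg x, sq_nonneg y, mul_nonneg hb0.le (sq_nonneg y)]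
    have hy : y = 0 := by
      simpa [hx, hb.ne_zero] using h
    simp_all
  -- `x² + b y² = c (z² + b)`, and multiplying by the norm `z² + b` of `z + √-b` turns the right
  -- side into `c` times a square.
  · refine exists_rat_sq_add_mul_sq_eq_of_int (x := x * z + b * y) (y := y * z - x)
      (z := z ^ 2 + b) (by positivity) ?_
    linear_combination (z ^ 2 + b) * h

end LegendreEquation

section RationalRepresentations

lemma isSquare_zmod_of_sq_mul {p l : ℕ} (hp : p.Prime) (hpl : ¬ p ∣ l) {a : ZMod p}
    (h : IsSquare ((l : ZMod p) ^ 2 * a)) : IsSquare a := by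
  have : Fact p.Prime := ⟨hp⟩
  have hl : (l : ZMod p) ≠ 0 := by rwa [Ne, ZMod.natCast_eq_zero_iff]
  obtain ⟨s, hs⟩ := h
  refine ⟨s / l, ?_⟩
  field_simp
  linear_combination hs

lemma odd_factorization_sq_mul {p l c : ℕ} (hl : l ≠ 0) (hc : Squarefree c) (hp : p.Prime)
    (hpc : p ∣ c) : Odd ((l ^ 2 * c).factorization p) := by
  rw [Nat.factorization_mul (pow_ne_zero 2 hl) hc.ne_zero, Nat.factorization_pow]
  simp [Nat.factorization_eq_one_of_squarefree hc hp hpc]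

theorem exists_rat_sq_sub_mul_sq_eq {D : ℤ} (hD : D < 0) {n : ℕ} (hn : n ≠ 0)
    (hcop : n.Coprime D.natAbs)
    (hDsq : ∀ p : ℕ, p.Prime → Odd (n.factorization p) → IsSquare (D : ZMod p))
    (hnsq : ∀ p : ℕ, p.Prime → p ≠ 2 → p ∣ D.natAbs → IsSquare (n : ZMod p)) :
    ∃ x y : ℚ, x ^ 2 - D * y ^ 2 = n := by
  obtain ⟨b, k, hkb, hb⟩ := Nat.sq_mul_squarefree D.natAbs
  obtain ⟨c, l, rfl, hc⟩ := Nat.sq_mul_squarefree n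
  obtain rfl : D = (k ^ 2 * -b : ℤ) := by
    zify at hkb
    rw [abs_of_neg hD] at hkb
    linear_combination hkb
  have hk : k ≠ 0 := by rintro rfl; simp at hD
  have hl : l ≠ 0 := by rintro rfl; simp at hn
  rw [← hkb] at hcop hnsq
  have hnot_dvd {p u v : ℕ} (hp : p.Prime) (hpu : p ∣ u) (huv : u.Coprime v) : ¬ p ∣ v :=
    fun hpv ↦ Nat.not_coprime_of_dvd_of_dvd hp.one_lt hpu hpv huv
  have hbsq : IsSquare ((-b : ℤ) : ZMod c) :=
    isSquare_intCast_zmod_of_squarefree (-b) hc fun p hp hpc ↦ by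
      refine isSquare_zmod_of_sq_mul hp
        (fun hpk ↦ hnot_dvd hp (hpc.mul_left _) hcop (hpk.pow two_ne_zero |>.mul_right b)) ?_
      simpa using hDsq p hp (odd_factorization_sq_mul hl hc hp hpc)
  have hcsq : IsSquare ((c : ℤ) : ZMod b) :=
    isSquare_intCast_zmod_of_squarefree c hb fun p hp hpb ↦ by
      obtain rfl | hp2 := eq_or_ne p 2
      · generalize ((c : ℤ) : ZMod 2) = a
        revert a
        decide
      refine isSquare_zmod_of_sq_mul hp (fun hpl ↦ hnot_dvd hp (hpb.mul_left _) hcop.symm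
        (hpl.pow two_ne_zero |>.mul_right c)) ?_
      simpa using hnsq p hp hp2 (hpb.mul_left _)
  obtain ⟨x, y, hxy⟩ := exists_rat_sq_add_mul_sq_eq hb hc
    hcop.symm.coprime_mul_left.coprime_mul_left_right (by simpa using hbsq) (by simpa using hcsq)
  refine ⟨l * x, l * y / k, ?_⟩
  push_cast
  field_simp
  linear_combination hxy

lemma exists_common_denominator_not_all_dvd {p : ℕ} (hp : p.Prime) (x y : ℚ) :
    ∃ w X Y : ℤ, w * x = X ∧ w * y = Y ∧ ¬ ((p : ℤ) ∣ w ∧ (p : ℤ) ∣ X ∧ (p : ℤ) ∣ Y) := by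
  classical
  have hex : ∃ w : ℕ, w ≠ 0 ∧ ∃ X Y : ℤ, w * x = X ∧ w * y = Y := by
    refine ⟨x.den * y.den, mul_ne_zero x.den_ne_zero y.den_ne_zero,
      y.den * x.num, x.den * y.num, ?_, ?_⟩ <;>
    · push_cast [← Rat.mul_den_eq_num]
      ring
  obtain ⟨hw, X, Y, hX, hY⟩ := Nat.find_spec hex
  refine ⟨Nat.find hex, X, Y, hX, hY, ?_⟩
  rintro ⟨hpw, ⟨X', rfl⟩, ⟨Y', rfl⟩⟩
  obtain ⟨v, hv⟩ := Int.natCast_dvd_natCast.1 hpw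
  have hv0 : v ≠ 0 := by
    rintro rfl
    exact hw hv
  have hp0 : (p : ℚ) ≠ 0 := Nat.cast_ne_zero.2 hp.ne_zero
  rw [hv] at hX hY
  push_cast [mul_assoc] at hX hY
  refine Nat.find_min hex (m := v) ?_
    ⟨hv0, X', Y', mul_left_cancel₀ hp0 hX, mul_left_cancel₀ hp0 hY⟩
  rw [hv]
  exact lt_mul_left hv0.bot_lt hp.one_lt

lemma exists_zmod_sq_sub_mul_sq_eq {p : ℕ} (hp : p.Prime) {m : ℤ}
    (hm : ∀ X Y : ℤ, (p : ℤ) ^ 2 ∣ X ^ 2 - m * Y ^ 2 → (p : ℤ) ∣ X ∧ (p : ℤ) ∣ Y)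
    {n : ℤ} (h : ∃ x y : ℚ, x ^ 2 - m * y ^ 2 = n) {N k : ℕ} (hN : N = p ^ k) :
    ∃ X Y : ZMod N, X ^ 2 - m * Y ^ 2 = n := by
  obtain ⟨x, y, h⟩ := h
  obtain ⟨w, X, Y, hX, hY, hprim⟩ := exists_common_denominator_not_all_dvd hp x y
  have hXY : X ^ 2 - m * Y ^ 2 = w ^ 2 * n := by
    qify
    rw [← hX, ← hY]
    linear_combination (w : ℚ) ^ 2 * h
  have hpw : ¬ (p : ℤ) ∣ w := fun hpw ↦
    hprim ⟨hpw, hm X Y (hXY ▸ (pow_dvd_pow_of_dvd hpw 2).mul_right n)⟩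
  have hcop : IsCoprime w (N : ℤ) := by
    rw [hN]
    push_cast
    exact ((Nat.prime_iff_prime_int.1 hp).coprime_iff_not_dvd.2 hpw).symm.pow_right
  have hunit := ZMod.coe_int_mul_inv_eq_one hcop
  have hcast := congrArg (Int.cast : ℤ → ZMod N) hXY
  push_cast at hcast
  refine ⟨X * (w : ZMod N)⁻¹, Y * (w : ZMod N)⁻¹, ?_⟩
  linear_combination (w : ZMod N)⁻¹ ^ 2 * hcast + n * (w * (w : ZMod N)⁻¹ + 1) * hunit

end RationalRepresentations

section PrimeDiscriminants

lemma IsFundamentalDiscriminant.emod_four_eq_one {Δ : ℤ} (hΔ : IsFundamentalDiscriminant Δ)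
    (hodd : Odd Δ) : Δ % 4 = 1 := by
  rw [Int.odd_iff] at hodd
  obtain ⟨-, ⟨h, -⟩ | ⟨m, rfl, -⟩⟩ := hΔ
  · exact h
  · omega

lemma IsFundamentalDiscriminant.not_sixteen_dvd {Δ : ℤ} (hΔ : IsFundamentalDiscriminant Δ) :
    ¬ 16 ∣ Δ := by
  obtain ⟨-, ⟨h, -⟩ | ⟨m, rfl, -, h⟩⟩ := hΔ <;> omega

lemma IsFundamentalDiscriminant.not_sq_dvd {Δ : ℤ} (hΔ : IsFundamentalDiscriminant Δ) {p : ℕ}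
    (hp : p.Prime) (hp2 : p ≠ 2) : ¬ (p : ℤ) ^ 2 ∣ Δ := by
  intro hdvd
  have hp' : Prime (p : ℤ) := Nat.prime_iff_prime_int.1 hp
  obtain ⟨-, ⟨-, hsq⟩ | ⟨m, rfl, hsq, -⟩⟩ := hΔ
  · exact hp'.not_isUnit (hsq p (by rwa [← sq]))
  · have hcop : IsCoprime ((p : ℤ) ^ 2) 4 := by
      have : IsCoprime (p : ℤ) (2 : ℕ) :=
        Nat.isCoprime_iff_coprime.2 ((Nat.coprime_primes hp Nat.prime_two).2 hp2)
      exact this.pow (m := 2) (n := 2)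
    exact hp'.not_isUnit (hsq p (by rw [← sq]; exact hcop.dvd_of_dvd_mul_left hdvd))

lemma IsPrimeDiscriminant.natAbs_prime {d : ℤ} (hd : IsPrimeDiscriminant d) (hodd : Odd d) :
    d.natAbs.Prime := by
  obtain ⟨⟨-, ⟨-, hsq⟩ | ⟨m, rfl, -⟩⟩, hcard⟩ := hd
  · obtain ⟨p, hp⟩ := Finset.card_eq_one.1 hcard
    have hprod := Nat.prod_primeFactors_of_squarefree (Int.squarefree_natAbs.2 hsq)
    rw [hp, Finset.prod_singleton] at hprod
    exact hprod ▸ Nat.prime_of_mem_primeFactors (hp ▸ Finset.mem_singleton_self p)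
  · exact absurd hodd (Int.not_odd_iff_even.2 (Even.mul_right (by decide) m))

lemma IsPrimeDiscriminant.eq_of_even {d : ℤ} (hd : IsPrimeDiscriminant d) (heven : Even d) :
    d = -4 ∨ d = 8 ∨ d = -8 := by
  rw [Int.even_iff] at heven
  obtain ⟨⟨-, ⟨hmod, -⟩ | ⟨m, rfl, hsq, hmod⟩⟩, hcard⟩ := hd
  · omega
  obtain ⟨p, hp⟩ := Finset.card_eq_one.1 hcard
  obtain rfl : 2 = p := by
    rw [← Finset.mem_singleton, ← hp, Nat.mem_primeFactors]
    exact ⟨Nat.prime_two, by omega, by omega⟩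
  have hsub : m.natAbs.primeFactors ⊆ {2} := by
    rw [← hp]
    exact Nat.primeFactors_mono (Int.natAbs_dvd_natAbs.2 (dvd_mul_left m 4)) (by omega)
  have hprod := Nat.prod_primeFactors_of_squarefree (Int.squarefree_natAbs.2 hsq)
  obtain h | h := Finset.subset_singleton_iff.1 hsub
  · rw [h, Finset.prod_empty] at hprod
    omega
  · rw [h, Finset.prod_singleton] at hprod
    omega

lemma IsPrimeDiscriminant.four_dvd_of_even {d : ℤ} (hd : IsPrimeDiscriminant d)
    (heven : Even d) : 4 ∣ d := by
  obtain rfl | rfl | rfl := hd.eq_of_even heven <;> decide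

lemma prod_erase_emod_four_eq_one {S : Finset ℤ} (hS : ∀ d ∈ S, IsPrimeDiscriminant d)
    (hΔ : IsFundamentalDiscriminant (∏ d ∈ S, d)) {d : ℤ} (hd : d ∈ S) (heven : Even d) :
    (∏ e ∈ S.erase d, e) % 4 = 1 := by
  have hodd : ∀ e ∈ S.erase d, Odd e := fun e he ↦ by
    by_contra hne
    have he4 := (hS e (Finset.mem_of_mem_erase he)).four_dvd_of_even (Int.not_odd_iff_even.1 hne)
    apply hΔ.not_sixteen_dvd
    rw [← Finset.mul_prod_erase S (fun e ↦ e) hd]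
    exact mul_dvd_mul ((hS d hd).four_dvd_of_even heven)
      (he4.trans (Finset.dvd_prod_of_mem (fun e ↦ e) he))
  refine Finset.prod_induction (fun e : ℤ ↦ e) (fun a ↦ a % 4 = 1) (fun a b ha hb ↦ ?_) rfl
    fun e he ↦ (hS e (Finset.mem_of_mem_erase he)).1.emod_four_eq_one (hodd e he)
  rw [Int.mul_emod, ha, hb]
  rfl

lemma exists_odd_mem_eq_natAbs {S : Finset ℤ} (hS : ∀ d ∈ S, IsPrimeDiscriminant d) {p : ℕ}
    (hp : p.Prime) (hp2 : p ≠ 2) (hdvd : (p : ℤ) ∣ ∏ d ∈ S, d) :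
    ∃ d ∈ S, Odd d ∧ p = d.natAbs := by
  obtain ⟨d, hd, hpd⟩ := ((Nat.prime_iff_prime_int.1 hp).dvd_finsetProd_iff _).1 hdvd
  rw [Int.natCast_dvd] at hpd
  have hodd : Odd d := by
    by_contra hne
    have hp8 : p ∣ 2 ^ 3 := hpd.trans (by
      obtain rfl | rfl | rfl := (hS d hd).eq_of_even (Int.not_odd_iff_even.1 hne) <;> decide)
    exact hp2 ((Nat.prime_dvd_prime_iff_eq hp Nat.prime_two).1 (hp.dvd_of_dvd_pow hp8))
  exact ⟨d, hd, hodd, (Nat.prime_dvd_prime_iff_eq hp ((hS d hd).natAbs_prime hodd)).1 hpd⟩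

end PrimeDiscriminants

section KroneckerSymbol

lemma kroneckerSym_eq_jacobiSym (d : ℤ) {n : ℕ} (hn : Odd n) :
    kroneckerSym d n = jacobiSym d n := by
  have : n.factorization 2 = 0 := Nat.factorization_eq_zero_of_not_dvd hn.not_two_dvd_nat
  simp [kroneckerSym, this]

lemma kroneckerSym_neg_four {n : ℕ} (hn : Odd n) : kroneckerSym (-4) n = ZMod.χ₄ n := by
  rw [kroneckerSym_eq_jacobiSym _ hn, jacobiSym.neg _ hn, jacobiSym.at_four hn, mul_one]

lemma kroneckerSym_eight {n : ℕ} (hn : Odd n) : kroneckerSym 8 n = ZMod.χ₈ n := by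
  rw [kroneckerSym_eq_jacobiSym _ hn, show (8 : ℤ) = 4 * 2 by rfl, jacobiSym.mul_left,
    jacobiSym.at_four hn, jacobiSym.at_two hn, one_mul]

lemma kroneckerSym_neg_eight {n : ℕ} (hn : Odd n) : kroneckerSym (-8) n = ZMod.χ₈' n := by
  rw [kroneckerSym_eq_jacobiSym _ hn, show (-8 : ℤ) = 4 * -2 by rfl, jacobiSym.mul_left,
    jacobiSym.at_four hn, jacobiSym.at_neg_two hn, one_mul]

lemma jacobiSym_eq_jacobiSym_natAbs {d : ℤ} (hd : d % 4 = 1) {k : ℕ} (hk : Odd k) :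
    jacobiSym d k = jacobiSym k d.natAbs := by
  obtain h | h := Int.natAbs_eq d
  · conv_lhs => rw [h]
    exact jacobiSym.quadratic_reciprocity_one_mod_four (by omega) hk
  · conv_lhs => rw [h]
    rw [jacobiSym.neg _ hk]
    obtain hk1 | hk3 := Nat.odd_mod_four_iff.1 (Nat.odd_iff.1 hk)
    · rw [ZMod.χ₄_nat_one_mod_four hk1, one_mul]
      exact jacobiSym.quadratic_reciprocity_one_mod_four' (Nat.odd_iff.2 (by omega)) hk1
    · rw [ZMod.χ₄_nat_three_mod_four hk3,
        jacobiSym.quadratic_reciprocity_three_mod_four (by omega) hk3, neg_one_mul, neg_neg]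

lemma χ₈_intCast_eq_jacobiSym_two {d : ℤ} (hd : Odd d) :
    ZMod.χ₈ (d : ZMod 8) = jacobiSym 2 d.natAbs := by
  have hneg : ∀ a : ZMod 8, ZMod.χ₈ (-a) = ZMod.χ₈ a := by decide
  rw [jacobiSym.at_two (Int.natAbs_odd.2 hd)]
  obtain h | h := Int.natAbs_eq d <;> conv_lhs => rw [h]
  · rw [Int.cast_natCast]
  · rw [Int.cast_neg, Int.cast_natCast, hneg]

lemma kroneckerSym_eq_jacobiSym_natAbs {d : ℤ} (hd : d % 4 = 1) {n : ℕ} (hn : n ≠ 0) :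
    kroneckerSym d n = jacobiSym n d.natAbs := by
  have hodd : Odd (n / 2 ^ n.factorization 2) := by
    rw [← Nat.not_even_iff_odd, even_iff_two_dvd]
    exact Nat.not_dvd_ordCompl Nat.prime_two hn
  rw [kroneckerSym, χ₈_intCast_eq_jacobiSym_two (Int.odd_iff.2 (by omega)),
    jacobiSym_eq_jacobiSym_natAbs hd hodd, ← jacobiSym.pow_left, ← jacobiSym.mul_left]
  congr 1
  exact_mod_cast Nat.ordProj_mul_ordCompl_eq_self n 2

lemma IsPrimeDiscriminant.kroneckerSym_eq_one_iff {d : ℤ} (hd : IsPrimeDiscriminant d)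
    (hodd : Odd d) {n : ℕ} (hn : n ≠ 0) (hcop : n.Coprime d.natAbs) :
    kroneckerSym d n = 1 ↔ IsSquare (n : ZMod d.natAbs) := by
  have : Fact d.natAbs.Prime := ⟨hd.natAbs_prime hodd⟩
  rw [kroneckerSym_eq_jacobiSym_natAbs (hd.1.emod_four_eq_one hodd) hn,
    ← jacobiSym.legendreSym.to_jacobiSym, legendreSym.eq_one_iff, Int.cast_natCast]
  rw [Int.cast_natCast, Ne, ZMod.natCast_eq_zero_iff]
  exact fun h ↦ this.out.one_lt.ne' (Nat.eq_one_of_dvd_coprimes hcop h dvd_rfl)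

end KroneckerSymbol

section Genera

lemma two_dvd_of_four_dvd_sq_sub_mul_sq {m : ℤ} (hm : m % 4 = 2 ∨ m % 4 = 3) (X Y : ℤ)
    (h : ((2 : ℕ) : ℤ) ^ 2 ∣ X ^ 2 - m * Y ^ 2) : ((2 : ℕ) : ℤ) ∣ X ∧ ((2 : ℕ) : ℤ) ∣ Y := by
  obtain ⟨a, rfl | rfl⟩ := Int.even_or_odd' X <;> obtain ⟨b, rfl | rfl⟩ := Int.even_or_odd' Y
  · exact ⟨⟨a, rfl⟩, ⟨b, rfl⟩⟩
  all_goals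
    ring_nf at h
    grind

lemma prime_dvd_of_sq_dvd_sq_sub_mul_sq {R : Type*} [CommRing R] [IsDomain R] {p m : R}
    (hp : Prime p) (hpm : p ∣ m) (hpm2 : ¬ p ^ 2 ∣ m) (X Y : R) (h : p ^ 2 ∣ X ^ 2 - m * Y ^ 2) :
    p ∣ X ∧ p ∣ Y := by
  have hX : p ∣ X := by
    refine hp.dvd_of_dvd_pow (n := 2) ?_
    exact (dvd_sub_left (hpm.mul_right (Y ^ 2))).1 ((dvd_pow_self p two_ne_zero).trans h)
  refine ⟨hX, ?_⟩
  by_contra hY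
  have hmY : p ^ 2 ∣ m * Y ^ 2 := (dvd_sub_right (pow_dvd_pow_of_dvd hX 2)).1 h
  exact hpm2 (hp.pow_dvd_of_dvd_mul_right 2 (fun h ↦ hY (hp.dvd_of_dvd_pow h)) hmY)

lemma kroneckerSym_eq_one_of_odd {Δ d : ℤ} (hΔ : IsFundamentalDiscriminant Δ)
    (hd : IsPrimeDiscriminant d) (hodd : Odd d) (hdΔ : d ∣ Δ) {n : ℕ} (hn : n ≠ 0)
    (hcop : n.Coprime Δ.natAbs) (h : ∃ x y : ℚ, x ^ 2 - Δ * y ^ 2 = n) :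
    kroneckerSym d n = 1 := by
  have hp := hd.natAbs_prime hodd
  have hp2 : d.natAbs ≠ 2 := fun h2 ↦ by
    have := Int.natAbs_odd.2 hodd
    rw [h2] at this
    exact absurd this (by decide)
  have hpΔ : (d.natAbs : ℤ) ∣ Δ := Int.natAbs_dvd.2 hdΔ
  obtain ⟨X, Y, hXY⟩ := exists_zmod_sq_sub_mul_sq_eq hp (prime_dvd_of_sq_dvd_sq_sub_mul_sq
    (Nat.prime_iff_prime_int.1 hp) hpΔ (hΔ.not_sq_dvd hp hp2)) (n := n) (by exact_mod_cast h)
    (pow_one _).symm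
  rw [hd.kroneckerSym_eq_one_iff hodd hn (hcop.coprime_dvd_right (Int.natAbs_dvd_natAbs.2 hdΔ))]
  have hΔ0 : (Δ : ZMod d.natAbs) = 0 := (ZMod.intCast_zmod_eq_zero_iff_dvd _ _).2 hpΔ
  exact ⟨X, by simpa [hΔ0, sq] using hXY.symm⟩

lemma mulChar_natCast_eq_one_of_rat_norm {m : ℤ} (hm : m % 4 = 2 ∨ m % 4 = 3) {n : ℕ}
    (hn : Odd n) (h : ∃ x y : ℚ, x ^ 2 - 4 * m * y ^ 2 = n) {N k : ℕ} (hN : N = 2 ^ k)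
    {χ : MulChar (ZMod N) ℤ} {a : ℤ} (hma : m ≡ a [ZMOD N])
    (hχ : ∀ X Y : ZMod N, χ (X ^ 2 - a * Y ^ 2) = 0 ∨ χ (X ^ 2 - a * Y ^ 2) = 1) : χ n = 1 := by
  obtain ⟨x, y, hxy⟩ := h
  obtain ⟨X, Y, hXY⟩ := exists_zmod_sq_sub_mul_sq_eq Nat.prime_two
    (two_dvd_of_four_dvd_sq_sub_mul_sq hm) (n := n)
    ⟨x, 2 * y, by push_cast; linear_combination hxy⟩ hN
  have hunit : IsUnit (n : ZMod N) := by
    rw [ZMod.isUnit_iff_coprime, hN]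
    exact hn.coprime_two_right.pow_right k
  rw [(ZMod.intCast_eq_intCast_iff m a N).2 hma, Int.cast_natCast] at hXY
  rw [← hXY] at hunit ⊢
  exact (hχ X Y).resolve_left (hunit.map χ).ne_zero

lemma kroneckerSym_eq_one_of_even {d R : ℤ} (hd : IsPrimeDiscriminant d) (heven : Even d)
    (hR : R % 4 = 1) {n : ℕ} (hn : Odd n) (h : ∃ x y : ℚ, x ^ 2 - (d * R : ℤ) * y ^ 2 = n) :
    kroneckerSym d n = 1 := by
  obtain ⟨x, y, hxy⟩ := h
  obtain rfl | rfl | rfl := hd.eq_of_even heven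
  · rw [kroneckerSym_neg_four hn]
    exact mulChar_natCast_eq_one_of_rat_norm (m := -R) (a := -1) (by omega) hn
      ⟨x, y, by push_cast at hxy ⊢; linear_combination hxy⟩ (k := 2) rfl
      (by unfold Int.ModEq; omega) (by decide)
  · rw [kroneckerSym_eight hn]
    exact mulChar_natCast_eq_one_of_rat_norm (m := 2 * R) (a := 2) (by omega) hn
      ⟨x, y, by push_cast at hxy ⊢; linear_combination hxy⟩ (k := 3) rfl
      (by unfold Int.ModEq; omega) (by decide)
  · rw [kroneckerSym_neg_eight hn]
    exact mulChar_natCast_eq_one_of_rat_norm (m := -2 * R) (a := -2) (by omega) hn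
      ⟨x, y, by push_cast at hxy ⊢; linear_combination hxy⟩ (k := 3) rfl
      (by unfold Int.ModEq; omega) (by decide)

variable {Δ : ℤ} {S : Finset ℤ} {n : ℕ}

theorem kroneckerSym_eq_one_of_rat_norm (hΔ : IsFundamentalDiscriminant Δ)
    (hS : ∀ d ∈ S, IsPrimeDiscriminant d) (hprod : ∏ d ∈ S, d = Δ) (hn : n ≠ 0)
    (hcop : n.Coprime Δ.natAbs) (h : ∃ x y : ℚ, x ^ 2 - Δ * y ^ 2 = n) :
    ∀ d ∈ S, kroneckerSym d n = 1 := by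
  intro d hd
  have hdΔ : d ∣ Δ := hprod ▸ Finset.dvd_prod_of_mem (fun d ↦ d) hd
  obtain heven | hodd := Int.even_or_odd d
  · have hn_odd : Odd n := by
      have h2Δ : 2 ∣ Δ.natAbs := Int.natAbs_dvd_natAbs.2 (heven.two_dvd.trans hdΔ)
      exact Nat.coprime_two_right.1 (hcop.coprime_dvd_right h2Δ)
    refine kroneckerSym_eq_one_of_even (hS d hd) heven
      (prod_erase_emod_four_eq_one hS (hprod ▸ hΔ) hd heven) hn_odd ?_
    rwa [Finset.mul_prod_erase S (fun d ↦ d) hd, hprod]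
  · exact kroneckerSym_eq_one_of_odd hΔ (hS d hd) hodd hdΔ hn hcop h

theorem exists_rat_norm_of_kroneckerSym_eq_one (hΔ : Δ < 0)
    (hS : ∀ d ∈ S, IsPrimeDiscriminant d) (hprod : ∏ d ∈ S, d = Δ) (hn : n ≠ 0)
    (hcop : n.Coprime Δ.natAbs)
    (hΔsq : ∀ p : ℕ, p.Prime → Odd (n.factorization p) → IsSquare (Δ : ZMod p))
    (h : ∀ d ∈ S, kroneckerSym d n = 1) : ∃ x y : ℚ, x ^ 2 - Δ * y ^ 2 = n := by
  refine exists_rat_sq_sub_mul_sq_eq hΔ hn hcop hΔsq fun p hp hp2 hpΔ ↦ ?_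
  obtain ⟨d, hd, hodd, rfl⟩ := exists_odd_mem_eq_natAbs hS hp hp2
    (hprod ▸ Int.natCast_dvd.2 hpΔ)
  exact ((hS d hd).kroneckerSym_eq_one_iff hodd hn (hcop.coprime_dvd_right hpΔ)).1 (h d hd)

end Genera

section IdealClasses

open scoped Pointwise

variable {R : Type*} [CommRing R]

lemma exists_mk0_eq_and_isCoprime [IsDedekindDomain R] (c : ClassGroup R) {D : Ideal R}
    (hD : D ≠ ⊥) : ∃ I : (Ideal R)⁰, ClassGroup.mk0 I = c ∧ IsCoprime (I : Ideal R) D := by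
  obtain rfl | hD' := eq_or_ne D ⊤
  · obtain ⟨I, hI⟩ := ClassGroup.mk0_surjective c
    exact ⟨I, hI, by simp [Ideal.isCoprime_iff_sup_eq]⟩
  obtain ⟨J, hJ⟩ := ClassGroup.mk0_surjective c⁻¹
  have hJ0 : (J : Ideal R) ≠ 0 := nonZeroDivisors.coe_ne_zero J
  obtain ⟨a, ha⟩ := IsDedekindDomain.exists_sup_span_eq
    (I := (J : Ideal R) * D) (J := J)
    Ideal.mul_le_left (mul_ne_zero hJ0 hD)
  obtain ⟨I, hI⟩ := Ideal.dvd_iff_le.2 (le_sup_right.trans_eq ha)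
  have hsup : D ⊔ I = ⊤ := by
    rw [hI, ← Ideal.mul_sup] at ha
    exact mul_left_cancel₀ hJ0 (ha.trans (Ideal.mul_top _).symm)
  have hI0 : I ≠ 0 := by
    rintro rfl
    exact hD' (by simpa using hsup)
  refine ⟨⟨I, mem_nonZeroDivisors_of_ne_zero hI0⟩, ?_, ?_⟩
  · rw [← inv_inv c, ← hJ, ClassGroup.mk0_eq_mk0_inv_iff]
    refine ⟨a, ?_, by rw [hI, mul_comm]⟩
    rintro rfl
    rw [Ideal.span_singleton_zero] at hI
    exact mul_ne_zero hJ0 hI0 hI.symm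
  · rw [Ideal.isCoprime_iff_sup_eq, sup_comm, hsup]

variable {G : Type*} [Group G] [MulSemiringAction G R] {σ : G}

lemma sup_mul_smul_sup_mul_eq {A C : Ideal R} (h : A * σ • A = C * σ • C) :
    (A ⊔ C) * σ • (A ⊔ C) * (A * C) = C * σ • C * ((A ⊔ C) * (A ⊔ C)) := by
  have hA : A * σ • (A ⊔ C) = σ • C * (A ⊔ C) := by
    rw [Ideal.smul_sup, Ideal.mul_sup, Ideal.mul_sup, h, sup_comm, mul_comm A, mul_comm C]
  calc (A ⊔ C) * σ • (A ⊔ C) * (A * C)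
      = (A ⊔ C) * C * (A * σ • (A ⊔ C)) := by ring
    _ = (A ⊔ C) * C * (σ • C * (A ⊔ C)) := by rw [hA]
    _ = C * σ • C * ((A ⊔ C) * (A ⊔ C)) := by ring

lemma isSquare_mk0_mul_mk0_of_mul_smul_eq [IsDedekindDomain R] {A C : (Ideal R)⁰}
    (h : (A * σ • (A : Ideal R) : Ideal R) = C * σ • (C : Ideal R))
    (hprin : ∀ J : Ideal R, (J * σ • J).IsPrincipal) :
    IsSquare (ClassGroup.mk0 A * ClassGroup.mk0 C) := by
  have hC : (C : Ideal R) ≠ 0 := nonZeroDivisors.coe_ne_zero C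
  have hB : (A ⊔ C : Ideal R) ≠ 0 := fun h ↦ hC (eq_bot_mono le_sup_right h)
  have hgen {J : Ideal R} (hJ : J ≠ 0) : ∃ x : R, x ≠ 0 ∧ J * σ • J = Ideal.span {x} := by
    obtain ⟨x, hx⟩ := hprin J
    refine ⟨x, ?_, hx⟩
    rintro rfl
    exact mul_ne_zero hJ ((smul_ne_zero_iff_ne σ).2 hJ) (hx.trans Ideal.span_zero)
  obtain ⟨b, hb0, hb⟩ := hgen hB
  obtain ⟨c, hc0, hc⟩ := hgen hC
  refine ⟨ClassGroup.mk0 ⟨A ⊔ C, mem_nonZeroDivisors_of_ne_zero hB⟩, ?_⟩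
  rw [← map_mul, ← map_mul, ClassGroup.mk0_eq_mk0_iff]
  refine ⟨b, c, hb0, hc0, ?_⟩
  push_cast
  rw [← hb, ← hc]
  exact sup_mul_smul_sup_mul_eq h

end IdealClasses

section IdealNorms

variable {R : Type*} [CommRing R] [IsDedekindDomain R] [Module.Free ℤ R]

lemma isSquare_zmod_of_absNorm_eq {P : Ideal R} {p : ℕ} (hp : p.Prime)
    (hP : Ideal.absNorm P = p) {D : ℤ} (hD : IsSquare (D : R)) : IsSquare (D : ZMod p) := by
  have hcard : Nat.card (R ⧸ P) = p := by
    rw [← hP, Ideal.absNorm_apply, Submodule.cardQuot_apply]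
  have : Finite (R ⧸ P) := Nat.finite_of_card_ne_zero (hcard ▸ hp.ne_zero)
  have := Fintype.ofFinite (R ⧸ P)
  let e := ZMod.ringEquivOfPrime (R ⧸ P) hp (Nat.card_eq_fintype_card.symm.trans hcard)
  simpa using (hD.map (Ideal.Quotient.mk P)).map e.symm

variable [Module.Finite ℤ R]

lemma eq_of_le_of_absNorm_eq {I J : Ideal R} (hI : I ≠ ⊥) (hle : I ≤ J)
    (hnorm : Ideal.absNorm I = Ideal.absNorm J) : I = J := by
  obtain ⟨L, rfl⟩ := Ideal.dvd_iff_le.mpr hle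
  have hJ : Ideal.absNorm J ≠ 0 := by
    rw [Ne, Ideal.absNorm_eq_zero_iff]
    exact left_ne_zero_of_mul hI
  rw [map_mul, Nat.mul_eq_left hJ, Ideal.absNorm_eq_one_iff] at hnorm
  rw [hnorm, Ideal.mul_top]

lemma coprime_absNorm_of_isCoprime {I : Ideal R} {D : ℤ}
    (h : IsCoprime I (Ideal.span {(D : R)})) : (Ideal.absNorm I).Coprime D.natAbs := by
  refine Nat.coprime_of_dvd fun p hp hpI hpD ↦ ?_
  obtain ⟨P, hP, hunder, hPI⟩ := Ideal.exists_isMaximal_dvd_of_dvd_absNorm' hp I hpI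
  have hDP : (D : R) ∈ P := by
    have : D ∈ P.under ℤ := by
      rw [hunder, Ideal.mem_span_singleton]
      exact Int.natCast_dvd.2 hpD
    simpa using this
  refine hP.ne_top (eq_top_iff.2 ?_)
  rw [← Ideal.isCoprime_iff_sup_eq.1 h]
  exact sup_le (Ideal.dvd_iff_le.1 hPI) ((Ideal.span_singleton_le_iff_mem P).2 hDP)

lemma exists_isPrime_odd_factorization_absNorm {I : Ideal R} (hI : I ≠ ⊥) {p : ℕ}
    (h : Odd ((Ideal.absNorm I).factorization p)) :
    ∃ P : Ideal R, P.IsPrime ∧ P ≠ ⊥ ∧ Odd ((Ideal.absNorm P).factorization p) := by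
  induction I using UniqueFactorizationMonoid.induction_on_prime with
  | h₁ => exact absurd rfl hI
  | h₂ I hunit =>
    rw [Ideal.isUnit_iff.1 hunit, Ideal.absNorm_top] at h
    simp at h
  | h₃ I P hI0 hP ih =>
    by_cases hPodd : Odd ((Ideal.absNorm P).factorization p)
    · exact ⟨P, Ideal.isPrime_of_prime hP, hP.ne_zero, hPodd⟩
    · refine ih hI0 ?_
      rw [map_mul, Nat.factorization_mul (Ideal.absNorm_eq_zero_iff.not.2 hP.ne_zero)
        (Ideal.absNorm_eq_zero_iff.not.2 hI0), Finsupp.add_apply] at h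
      rwa [← Nat.not_even_iff_odd, ← Nat.odd_add.1 h]

end IdealNorms

section GaloisConjugates

open scoped Pointwise

variable {K : Type*} [Field K] [NumberField K]

lemma absNorm_galois_smul (σ : Gal(K/ℚ)) (I : Ideal (𝓞 K)) :
    Ideal.absNorm (σ • I) = Ideal.absNorm I := by
  rw [← Ideal.absNorm_relNorm ℤ, Ideal.relNorm_smul, Ideal.absNorm_relNorm]

lemma intCast_norm_eq_prod_galois_smul [IsGalois ℚ K] (x : 𝓞 K) :
    ((Algebra.norm ℤ x : ℤ) : 𝓞 K) = ∏ σ : Gal(K/ℚ), σ • x := by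
  apply RingOfIntegers.coe_injective
  rw [map_intCast, map_prod, ← Rat.cast_intCast, Algebra.coe_norm_int]
  exact Algebra.norm_eq_prod_automorphisms ℚ (x : K)

lemma span_absNorm_eq_prod_galois_smul [IsGalois ℚ K] (I : Ideal (𝓞 K)) :
    Ideal.span {(Ideal.absNorm I : 𝓞 K)} = ∏ σ : Gal(K/ℚ), σ • I := by
  obtain rfl | hI := eq_or_ne I ⊥
  · simp [Finset.prod_eq_zero (Finset.mem_univ (1 : Gal(K/ℚ)))]
  have hspan : Ideal.span {(Ideal.absNorm I : 𝓞 K)} =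
      (Ideal.relNorm ℤ I).map (algebraMap ℤ (𝓞 K)) := by
    rw [Ideal.relNorm_int, Ideal.map_span, Set.image_singleton, map_natCast]
  apply eq_of_le_of_absNorm_eq
  · simpa [Ideal.absNorm_eq_zero_iff] using hI
  · rw [hspan, Ideal.map_relNorm, Ideal.span_le]
    rintro _ ⟨x, hx, rfl⟩
    rw [Function.comp_apply, Algebra.intNorm_eq_norm, eq_intCast, intCast_norm_eq_prod_galois_smul]
    exact Ideal.prod_mem_prod fun σ _ ↦ Ideal.smul_mem_pointwise_smul σ x I hx
  · rw [hspan, Ideal.absNorm_algebraMap, Ideal.absNorm_relNorm, map_prod,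
      Finset.prod_congr rfl fun σ _ ↦ absNorm_galois_smul σ I, Finset.prod_const,
      Finset.card_univ, ← Nat.card_eq_fintype_card, IsGalois.card_aut_eq_finrank,
      RingOfIntegers.rank]

lemma abs_norm_eq_absNorm_span (x : 𝓞 K) :
    |Algebra.norm ℚ (x : K)| = Ideal.absNorm (Ideal.span {x}) := by
  rw [Ideal.absNorm_span_singleton, ← Algebra.coe_norm_int, Nat.cast_natAbs, Int.cast_abs]

end GaloisConjugates

section QuadraticFields

open scoped Pointwise

variable {K : Type*} [Field K] [NumberField K] [Algebra.IsQuadraticExtension ℚ K]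

lemma exists_galois_univ_eq_pair {F E : Type*} [Field F] [Field E] [Algebra F E]
    [Algebra.IsQuadraticExtension F E] [IsGalois F E] [DecidableEq Gal(E/F)] :
    ∃ σ : Gal(E/F), σ ≠ 1 ∧ (Finset.univ : Finset Gal(E/F)) = {1, σ} := by
  have hcard : Nat.card Gal(E/F) = 2 := by
    rw [IsGalois.card_aut_eq_finrank, Algebra.IsQuadraticExtension.finrank_eq_two]
  obtain ⟨σ, hσ, hunique⟩ := (Nat.card_eq_two_iff' 1).1 hcard
  refine ⟨σ, hσ, Finset.ext fun τ ↦ ?_⟩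
  simpa using (eq_or_ne τ 1).imp_right (hunique τ)

lemma isSquare_mk0_mul_mk0_of_absNorm_eq {A C : (Ideal (𝓞 K))⁰}
    (h : Ideal.absNorm (A : Ideal (𝓞 K)) = Ideal.absNorm (C : Ideal (𝓞 K))) :
    IsSquare (ClassGroup.mk0 A * ClassGroup.mk0 C) := by
  classical
  obtain ⟨σ, hσ, huniv⟩ := exists_galois_univ_eq_pair (F := ℚ) (E := K)
  have hnorm (J : Ideal (𝓞 K)) : J * σ • J = Ideal.span {(Ideal.absNorm J : 𝓞 K)} := by
    rw [span_absNorm_eq_prod_galois_smul, huniv, Finset.prod_pair hσ.symm, one_smul]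
  exact isSquare_mk0_mul_mk0_of_mul_smul_eq (σ := σ) (by rw [hnorm, hnorm, h])
    fun J ↦ ⟨_, hnorm J⟩

lemma exists_abs_norm_eq_absNorm_of_isSquare_mk0 {I : (Ideal (𝓞 K))⁰}
    (h : IsSquare (ClassGroup.mk0 I)) :
    ∃ γ : K, |Algebra.norm ℚ γ| = Ideal.absNorm (I : Ideal (𝓞 K)) := by
  obtain ⟨b, hb⟩ := h
  obtain ⟨B, rfl⟩ := ClassGroup.mk0_surjective b
  rw [← map_mul, ClassGroup.mk0_eq_mk0_iff] at hb
  obtain ⟨x, y, hx, -, hxy⟩ := hb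
  have hnorm := congrArg (fun J ↦ (Ideal.absNorm J : ℚ)) hxy
  simp only [Submonoid.coe_mul, map_mul, Nat.cast_mul, ← abs_norm_eq_absNorm_span] at hnorm
  have hNx : Algebra.norm ℚ (x : K) ≠ 0 := by simpa [Algebra.norm_ne_zero_iff] using hx
  refine ⟨y / x * (Ideal.absNorm (B : Ideal (𝓞 K)) : ℚ), ?_⟩
  rw [div_eq_mul_inv, map_mul, map_mul, Algebra.norm_inv, ← eq_ratCast (algebraMap ℚ K),
    Algebra.norm_algebraMap, Algebra.IsQuadraticExtension.finrank_eq_two, abs_mul, abs_mul, abs_inv,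
    abs_pow, Nat.abs_cast]
  field_simp
  linear_combination -hnorm

lemma isSquare_mk0_of_abs_norm_eq_absNorm {I : (Ideal (𝓞 K))⁰} {γ : K}
    (h : |Algebra.norm ℚ γ| = Ideal.absNorm (I : Ideal (𝓞 K))) :
    IsSquare (ClassGroup.mk0 I) := by
  obtain ⟨u, v, hv, rfl⟩ := IsFractionRing.div_surjective (𝓞 K) γ
  have hI : (Ideal.absNorm (I : Ideal (𝓞 K)) : ℚ) ≠ 0 := by
    simpa [Ideal.absNorm_eq_zero_iff] using nonZeroDivisors.coe_ne_zero I
  have hv0 : Algebra.norm ℚ (v : K) ≠ 0 := by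
    simpa [Algebra.norm_ne_zero_iff] using nonZeroDivisors.ne_zero hv
  have hu : u ≠ 0 := by
    rintro rfl
    simp [← h] at hI
  let U : (Ideal (𝓞 K))⁰ := ⟨Ideal.span {u}, by simpa using hu⟩
  let V : (Ideal (𝓞 K))⁰ := ⟨Ideal.span {v}, by simpa using hv⟩
  have hnorm : Ideal.absNorm (U : Ideal (𝓞 K)) =
      Ideal.absNorm ((V * I : (Ideal (𝓞 K))⁰) : Ideal (𝓞 K)) := by
    rw [div_eq_mul_inv, map_mul, Algebra.norm_inv, abs_mul, abs_inv,
      mul_inv_eq_iff_eq_mul₀ (abs_ne_zero.2 hv0)] at h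
    rw [Submonoid.coe_mul, map_mul]
    qify
    rw [← abs_norm_eq_absNorm_span, ← abs_norm_eq_absNorm_span, h, mul_comm]
  have hU : ClassGroup.mk0 U = 1 := (ClassGroup.mk0_eq_one_iff U.2).2 ⟨u, rfl⟩
  have hV : ClassGroup.mk0 V = 1 := (ClassGroup.mk0_eq_one_iff V.2).2 ⟨v, rfl⟩
  simpa [hU, hV] using isSquare_mk0_mul_mk0_of_absNorm_eq hnorm

variable {D : ℤ} {α : K}

lemma ratCast_ne_of_sq_eq_neg {F : Type*} [Field F] [CharZero F] {α : F} (hD : D < 0)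
    (hα : α ^ 2 = D) (q : ℚ) : (q : F) ≠ α := by
  rintro rfl
  have hq : q ^ 2 = D := by exact_mod_cast hα
  have hD' : (D : ℚ) < 0 := by exact_mod_cast hD
  exact absurd (sq_nonneg q) (by rw [hq]; exact hD'.not_ge)

lemma exists_rat_add_mul_eq (hD : D < 0) (hα : α ^ 2 = D) (γ : K) :
    ∃ x y : ℚ, x + y * α = γ := by
  have hli : LinearIndependent ℚ ![1, α] := by
    refine LinearIndependent.pair_iff.2 fun s t hst ↦ ?_
    simp only [Rat.smul_def, mul_one] at hst
    obtain rfl : t = 0 := by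
      by_contra ht
      refine ratCast_ne_of_sq_eq_neg hD hα (-s / t) ?_
      push_cast
      field_simp
      linear_combination -hst
    simpa using hst
  have hspan := hli.span_eq_top_of_card_eq_finrank
    (by rw [Algebra.IsQuadraticExtension.finrank_eq_two, Fintype.card_fin])
  have hγ : γ ∈ Submodule.span ℚ (Set.range ![1, α]) := hspan ▸ Submodule.mem_top
  rw [Matrix.range_cons_cons_empty, Submodule.mem_span_pair] at hγ
  simpa [Rat.smul_def] using hγ

lemma norm_rat_add_mul (hD : D < 0) (hα : α ^ 2 = D) (x y : ℚ) :
    Algebra.norm ℚ (x + y * α) = x ^ 2 - D * y ^ 2 := by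
  classical
  obtain ⟨σ, hσ, huniv⟩ := exists_galois_univ_eq_pair (F := ℚ) (E := K)
  have hσα : σ α = -α := by
    refine (sq_eq_sq_iff_eq_or_eq_neg.1 (by rw [← map_pow, hα, map_intCast])).resolve_left ?_
    intro hfix
    obtain ⟨q, hq⟩ := (IsGalois.mem_range_algebraMap_iff_fixed (F := ℚ) α).2 fun τ ↦ by
      have hτ := Finset.mem_univ τ
      rw [huniv, Finset.mem_insert, Finset.mem_singleton] at hτ
      obtain rfl | rfl := hτ
      exacts [rfl, hfix]
    exact ratCast_ne_of_sq_eq_neg hD hα q hq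
  apply (algebraMap ℚ K).injective
  rw [Algebra.norm_eq_prod_automorphisms, huniv, Finset.prod_pair hσ.symm]
  simp only [AlgEquiv.one_apply, map_add, map_mul, map_ratCast, map_sub, map_pow, map_intCast,
    hσα, eq_ratCast]
  linear_combination -(y : K) ^ 2 * hα

theorem isSquare_mk0_iff_exists_rat_norm (hD : D < 0) (hα : α ^ 2 = D) (I : (Ideal (𝓞 K))⁰) :
    IsSquare (ClassGroup.mk0 I) ↔
      ∃ x y : ℚ, x ^ 2 - D * y ^ 2 = Ideal.absNorm (I : Ideal (𝓞 K)) := by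
  have habs (x y : ℚ) : |Algebra.norm ℚ (x + y * α)| = x ^ 2 - D * y ^ 2 := by
    have hD' : (D : ℚ) < 0 := by exact_mod_cast hD
    rw [norm_rat_add_mul hD hα]
    exact abs_of_nonneg (by nlinarith [sq_nonneg x, sq_nonneg y])
  constructor
  · intro h
    obtain ⟨γ, hγ⟩ := exists_abs_norm_eq_absNorm_of_isSquare_mk0 h
    obtain ⟨x, y, rfl⟩ := exists_rat_add_mul_eq hD hα γ
    exact ⟨x, y, (habs x y).symm.trans hγ⟩
  · rintro ⟨x, y, hxy⟩
    exact isSquare_mk0_of_abs_norm_eq_absNorm ((habs x y).trans hxy)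

lemma absNorm_eq_of_odd_factorization {P : Ideal (𝓞 K)} (hP : P.IsPrime) (hP0 : P ≠ ⊥) {p : ℕ}
    (h : Odd ((Ideal.absNorm P).factorization p)) : p.Prime ∧ Ideal.absNorm P = p := by
  have := hP.isMaximal hP0
  obtain ⟨q, k, hk, hqP, hq, hnorm⟩ := Ideal.exists_prime_and_absNorm_eq_pow P
  have hk2 : k ≤ 2 := by
    have hdvd := Ideal.absNorm_dvd_absNorm_of_le ((Ideal.span_singleton_le_iff_mem P).2 hqP)
    rw [Ideal.absNorm_span_natCast, RingOfIntegers.rank,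
      Algebra.IsQuadraticExtension.finrank_eq_two, hnorm] at hdvd
    exact (Nat.pow_dvd_pow_iff_le_right hq.one_lt).1 hdvd
  rw [hnorm, hq.factorization_pow, Finsupp.single_apply] at h
  split_ifs at h with hqp
  · obtain rfl : k = 1 := by grind
    exact ⟨hqp ▸ hq, by rw [hnorm, pow_one, hqp]⟩
  · simp at h

lemma isSquare_zmod_of_odd_factorization_absNorm (hα : α ^ 2 = D) {I : Ideal (𝓞 K)} (hI : I ≠ ⊥)
    {p : ℕ} (h : Odd ((Ideal.absNorm I).factorization p)) : IsSquare (D : ZMod p) := by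
  obtain ⟨P, hP, hP0, hPodd⟩ := exists_isPrime_odd_factorization_absNorm hI h
  obtain ⟨hp, hnorm⟩ := absNorm_eq_of_odd_factorization hP hP0 hPodd
  have hint : IsIntegral ℤ α := IsIntegral.of_pow two_pos (hα ▸ isIntegral_intCast D)
  refine isSquare_zmod_of_absNorm_eq hp hnorm ⟨⟨α, hint⟩, ?_⟩
  apply RingOfIntegers.coe_injective
  rw [map_intCast, ← hα, sq]
  rfl

end QuadraticFields

/-- (Principal Genus Theorem for imaginary quadratic fields) Let `Δ < 0` be a fundamental
discriminant with factorization `Δ = Δ₁ ⋯ Δ_t` into prime discriminants (encoded as the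
finite set `S` of prime discriminants with product `Δ`), and let `K = ℚ(√Δ)` (formalized as
any degree-2 number field containing a square root of `Δ`). An ideal class `c ∈ Cl(K)` is a
square if and only if for every nonzero ideal `𝔞` of `O_K` belonging to `c` and coprime to
`Δ`, the Kronecker symbols `(Δ_j / N𝔞)` equal `1` for all `j`, where `N𝔞` is the absolute
norm of `𝔞`. -/
theorem principal_genus_theorem
    (Δ : ℤ) (hΔ : IsFundamentalDiscriminant Δ) (hneg : Δ < 0)
    (S : Finset ℤ) (hS : ∀ d ∈ S, IsPrimeDiscriminant d) (hprod : (∏ d ∈ S, d) = Δ)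
    (K : Type) [Field K] [NumberField K]
    (hdeg : Module.finrank ℚ K = 2)
    (α : K) (hα : α ^ 2 = (Δ : K))
    (c : ClassGroup (𝓞 K)) :
    IsSquare c ↔
      ∀ (𝔞 : Ideal (𝓞 K)) (h𝔞 : 𝔞 ∈ (Ideal (𝓞 K))⁰),
        ClassGroup.mk0 ⟨𝔞, h𝔞⟩ = c →
        IsCoprime 𝔞 (Ideal.span {(Δ : 𝓞 K)}) →
        ∀ d ∈ S, kroneckerSym d (Ideal.absNorm 𝔞) = 1 := by
  have : Algebra.IsQuadraticExtension ℚ K := { finrank_eq_two' := hdeg }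
  have hnorm (I : (Ideal (𝓞 K))⁰) : Ideal.absNorm (I : Ideal (𝓞 K)) ≠ 0 :=
    Ideal.absNorm_eq_zero_iff.not.2 (nonZeroDivisors.coe_ne_zero I)
  constructor
  · rintro hsq I hI rfl hcop
    exact kroneckerSym_eq_one_of_rat_norm hΔ hS hprod (hnorm ⟨I, hI⟩)
      (coprime_absNorm_of_isCoprime hcop)
      ((isSquare_mk0_iff_exists_rat_norm hneg hα ⟨I, hI⟩).1 hsq)
  · intro h
    obtain ⟨I, rfl, hcop⟩ := exists_mk0_eq_and_isCoprime c (D := Ideal.span {(Δ : 𝓞 K)})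
      (by simpa using hneg.ne)
    refine (isSquare_mk0_iff_exists_rat_norm hneg hα I).2 ?_
    exact exists_rat_norm_of_kroneckerSym_eq_one hneg hS hprod (hnorm I)
      (coprime_absNorm_of_isCoprime hcop)
      (fun p _ ↦ isSquare_zmod_of_odd_factorization_absNorm hα (nonZeroDivisors.coe_ne_zero I))
      (h I I.2 rfl hcop)
end
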